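/- arXiv:1609.04154 — 8 statements merged into one kernel-verified Lean document; each statement's English description precedes it below -/
import Mathlib

section
/- Up to the Weyl group W(D₆) there are exactly two primitive embeddings of the root lattice A₅ into the root lattice D₆ (existence part): for every injective ℤ-linear map φ : A₅ → D₆ that preserves the bilinear form and whose image is a primitive submodule of D₆, there exists an element w ∈ W(D₆) such that w(φ(A₅)) = i₁(A₅) or w(φ(A₅)) = i₂(A₅). -/
noncomputable section

abbrev V6 : Type := Fin 6 → ℚ

/-- The standard bilinear form on `ℚ⁶`. -/
def bil6 (x y : V6) : ℚ := ∑ i, x i * y i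

def d1 : V6 := ![1, -1, 0, 0, 0, 0]
def d2 : V6 := ![0, 1, -1, 0, 0, 0]
def d3 : V6 := ![0, 0, 1, -1, 0, 0]
def d4 : V6 := ![0, 0, 0, 1, -1, 0]
def d5 : V6 := ![0, 0, 0, 0, 1, -1]
def d6 : V6 := ![0, 0, 0, 0, 1, 1]

/-- The `D₆` root lattice: integer vectors with even coordinate sum. -/
def D6 : Submodule ℤ V6 where
  carrier := {x | (∀ i, ∃ m : ℤ, x i = (m : ℚ)) ∧ ∃ k : ℤ, (∑ i, x i) = 2 * (k : ℚ)}
  add_mem' := by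
    rintro x y ⟨hx1, kx, hx2⟩ ⟨hy1, ky, hy2⟩
    refine ⟨fun i => ?_, kx + ky, ?_⟩
    · obtain ⟨m, hm⟩ := hx1 i
      obtain ⟨m', hm'⟩ := hy1 i
      exact ⟨m + m', by push_cast [Pi.add_apply, hm, hm']; ring⟩
    · have : (∑ i, (x + y) i) = (∑ i, x i) + ∑ i, y i := by
        simp [Pi.add_apply, Finset.sum_add_distrib]
      rw [this, hx2, hy2]; push_cast; ring
  zero_mem' := ⟨fun i => ⟨0, by simp⟩, 0, by simp⟩
  smul_mem' := by
    rintro c x ⟨hx1, k, hx2⟩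
    refine ⟨fun i => ?_, c * k, ?_⟩
    · obtain ⟨m, hm⟩ := hx1 i
      refine ⟨c * m, ?_⟩
      have : (c • x) i = (c : ℚ) * x i := by simp [Pi.smul_apply, zsmul_eq_mul]
      rw [this, hm]; push_cast; ring
    · have : (∑ i, (c • x) i) = (c : ℚ) * ∑ i, x i := by
        simp [Pi.smul_apply, zsmul_eq_mul, Finset.mul_sum]
      rw [this, hx2]; push_cast; ring

/-- The first embedding `i₁(A₅) ⊂ D₆`, spanned by `d₁,…,d₅`. -/
def i1A5 : Submodule ℤ V6 := Submodule.span ℤ {d1, d2, d3, d4, d5}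

/-- The second embedding `i₂(A₅) ⊂ D₆`, spanned by `d₁,…,d₄,d₆`. -/
def i2A5 : Submodule ℤ V6 := Submodule.span ℤ {d1, d2, d3, d4, d6}

/-- The Weyl group `W(D₆)`: the subgroup of linear automorphisms of `ℚ⁶` generated by
the reflections in the roots (norm-`2` vectors) of `D₆`. -/
def WeylD6 : Subgroup (V6 ≃ₗ[ℚ] V6) :=
  Subgroup.closure {s | ∃ r ∈ (D6 : Set V6), bil6 r r = 2 ∧ ∀ x, s x = x - bil6 x r • r}


/-- The `A₅` root lattice: integer vectors in `ℚ⁶` with coordinate sum zero. -/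
def A5 : Submodule ℤ V6 where
  carrier := {x | (∀ i, ∃ m : ℤ, x i = (m : ℚ)) ∧ (∑ i, x i) = 0}
  add_mem' := by
    rintro x y ⟨hx1, hx2⟩ ⟨hy1, hy2⟩
    refine ⟨fun i => ?_, ?_⟩
    · obtain ⟨m, hm⟩ := hx1 i
      obtain ⟨m', hm'⟩ := hy1 i
      exact ⟨m + m', by push_cast [Pi.add_apply, hm, hm']; ring⟩
    · have : (∑ i, (x + y) i) = (∑ i, x i) + ∑ i, y i := by
        simp [Pi.add_apply, Finset.sum_add_distrib]
      rw [this, hx2, hy2]; ring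
  zero_mem' := ⟨fun i => ⟨0, by simp⟩, by simp⟩
  smul_mem' := by
    rintro c x ⟨hx1, hx2⟩
    refine ⟨fun i => ?_, ?_⟩
    · obtain ⟨m, hm⟩ := hx1 i
      refine ⟨c * m, ?_⟩
      have : (c • x) i = (c : ℚ) * x i := by simp [Pi.smul_apply, zsmul_eq_mul]
      rw [this, hm]; push_cast; ring
    · have : (∑ i, (c • x) i) = (c : ℚ) * ∑ i, x i := by
        simp [Pi.smul_apply, zsmul_eq_mul, Finset.mul_sum]
      rw [this, hx2]; ring

/-- `v` is a root of `D₆`. -/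
def IsRootD6 (v : V6) : Prop := v ∈ D6 ∧ bil6 v v = 2

lemma bil6_comm (x y : V6) : bil6 x y = bil6 y x := by
  simp only [bil6, mul_comm]

lemma bil6_add_left (x y z : V6) : bil6 (x + y) z = bil6 x z + bil6 y z := by
  simp only [bil6, Pi.add_apply, add_mul, Finset.sum_add_distrib]

lemma bil6_smul_left (c : ℚ) (x y : V6) : bil6 (c • x) y = c * bil6 x y := by
  simp only [bil6, Pi.smul_apply, smul_eq_mul, Finset.mul_sum, mul_assoc]

lemma bil6_sub_left (x y z : V6) : bil6 (x - y) z = bil6 x z - bil6 y z := by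
  simp only [bil6, Pi.sub_apply, sub_mul, Finset.sum_sub_distrib]

lemma bil6_sub_right (x y z : V6) : bil6 x (y - z) = bil6 x y - bil6 x z := by
  simp only [bil6, Pi.sub_apply, mul_sub, Finset.sum_sub_distrib]

lemma bil6_smul_right (c : ℚ) (x y : V6) : bil6 x (c • y) = c * bil6 x y := by
  rw [bil6_comm, bil6_smul_left, bil6_comm]

lemma bil6_self_eq_zero {x : V6} (h : bil6 x x = 0) : x = 0 := by
  funext i
  have := (Finset.sum_eq_zero_iff_of_nonneg fun i _ => mul_self_nonneg (x i)).1 h i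
    (Finset.mem_univ i)
  simpa using this

/-- The reflection in a vector of norm `2`. -/
def reflectionD6 (r : V6) (hr : bil6 r r = 2) : V6 ≃ₗ[ℚ] V6 :=
  LinearEquiv.ofInvolutive
    { toFun := fun x => x - bil6 x r • r
      map_add' := fun x y => by rw [bil6_add_left]; module
      map_smul' := fun c x => by rw [bil6_smul_left, RingHom.id_apply]; module }
    fun x => by
      simp only [LinearMap.coe_mk, AddHom.coe_mk, bil6_sub_left, bil6_smul_left, hr]
      module

lemma reflectionD6_apply (r : V6) (hr : bil6 r r = 2) (x : V6) :
    reflectionD6 r hr x = x - bil6 x r • r := rfl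

lemma reflectionD6_mem {r : V6} (hr : IsRootD6 r) : reflectionD6 r hr.2 ∈ WeylD6 :=
  Subgroup.subset_closure ⟨r, hr.1, hr.2, reflectionD6_apply r hr.2⟩

lemma bil6_mem_int {x y : V6} (hx : x ∈ D6) (hy : y ∈ D6) : ∃ m : ℤ, bil6 x y = m := by
  choose a ha using hx.1
  choose b hb using hy.1
  exact ⟨∑ i, a i * b i, by simp [bil6, ha, hb]⟩

lemma bil6_map_of_mem_WeylD6 {w : V6 ≃ₗ[ℚ] V6} (hw : w ∈ WeylD6) :
    ∀ x y, bil6 (w x) (w y) = bil6 x y := by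
  induction hw using Subgroup.closure_induction with
  | mem s hs =>
    obtain ⟨r, -, hr, hs⟩ := hs
    intro x y
    simp only [hs, bil6_sub_left, bil6_sub_right, bil6_smul_left, bil6_smul_right, hr,
      bil6_comm r y]
    ring
  | one => intro x y; rfl
  | mul a b _ _ ha hb => intro x y; exact (ha _ _).trans (hb x y)
  | inv a _ ha =>
    intro x y
    rw [← ha]
    exact congrArg₂ bil6 (a.apply_symm_apply x) (a.apply_symm_apply y)

lemma map_mem_D6_of_mem_WeylD6 {w : V6 ≃ₗ[ℚ] V6} (hw : w ∈ WeylD6) :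
    ∀ x, w x ∈ D6 ↔ x ∈ D6 := by
  induction hw using Subgroup.closure_induction with
  | mem s hs =>
    obtain ⟨r, hrD, hr, hs⟩ := hs
    have maps : ∀ x ∈ D6, s x ∈ D6 := by
      intro x hx
      obtain ⟨m, hm⟩ := bil6_mem_int hx hrD
      rw [hs, hm, Int.cast_smul_eq_zsmul]
      exact D6.sub_mem hx (D6.smul_mem m hrD)
    have invol : ∀ x, s (s x) = x := by
      intro x
      simp only [hs, bil6_sub_left, bil6_smul_left, hr]
      module
    exact fun x => ⟨fun h => invol x ▸ maps _ h, maps x⟩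
  | one => intro x; rfl
  | mul a b _ _ ha hb => intro x; exact (ha _).trans (hb x)
  | inv a _ ha =>
    intro x
    rw [← ha]
    exact iff_of_eq (congrArg (· ∈ D6) (a.apply_symm_apply x))

lemma IsRootD6.map {w : V6 ≃ₗ[ℚ] V6} (hw : w ∈ WeylD6) {v : V6} (hv : IsRootD6 v) :
    IsRootD6 (w v) :=
  ⟨(map_mem_D6_of_mem_WeylD6 hw v).2 hv.1, (bil6_map_of_mem_WeylD6 hw v v).trans hv.2⟩

/-- Two roots with positive inner product are exchanged by a Weyl group element which fixes every
vector having the same inner product with both. -/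
lemma exists_weyl_map_of_pos {r s : V6} (hr : IsRootD6 r) (hs : IsRootD6 s)
    (h : 0 < bil6 r s) :
    ∃ w ∈ WeylD6, w r = s ∧ ∀ x, bil6 x r = bil6 x s → w x = x := by
  have hnorm : bil6 (r - s) (r - s) = 4 - 2 * bil6 r s := by
    simp only [bil6_sub_left, bil6_sub_right, hr.2, hs.2, bil6_comm s r]
    ring
  have hnonneg : 0 ≤ bil6 (r - s) (r - s) := Finset.sum_nonneg fun i _ => mul_self_nonneg _
  obtain ⟨m, hm⟩ := bil6_mem_int hr.1 hs.1
  rw [hnorm, hm] at hnonneg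
  have hm_pos : 0 < m := by rw [hm] at h; exact_mod_cast h
  have hm_le : m ≤ 2 := by
    have : (m : ℚ) ≤ 2 := by linarith
    exact_mod_cast this
  obtain rfl | rfl : m = 1 ∨ m = 2 := by omega
  · have hroot : IsRootD6 (r - s) :=
      ⟨D6.sub_mem hr.1 hs.1, by rw [hnorm, hm]; norm_num⟩
    refine ⟨reflectionD6 _ hroot.2, reflectionD6_mem hroot, ?_, fun x hx => ?_⟩
    · rw [reflectionD6_apply, bil6_sub_right, hr.2, hm]
      norm_num
    · rw [reflectionD6_apply, bil6_sub_right, hx, sub_self, zero_smul, sub_zero]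
  · have : r - s = 0 := bil6_self_eq_zero (by rw [hnorm, hm]; norm_num)
    exact ⟨1, one_mem _, sub_eq_zero.1 this, fun _ _ => rfl⟩

/-- The vector of `ℚ⁶` with the given integer coordinates. -/
def intVec (x : Fin 6 → ℤ) : V6 := fun i => x i

lemma bil6_intVec (x y : Fin 6 → ℤ) : bil6 (intVec x) (intVec y) = ((x ⬝ᵥ y : ℤ) : ℚ) := by
  simp [bil6, intVec, dotProduct]

/-- The integer coordinates of the roots `±eₐ ± e_b`, `a < b`, of `D₆`. -/
def rootsInt : List (Fin 6 → ℤ) :=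
  (List.finRange 6).flatMap fun a => (List.finRange 6).flatMap fun b =>
    if a < b then
      [Pi.single a 1 + Pi.single b 1, Pi.single a 1 - Pi.single b 1,
        Pi.single b 1 - Pi.single a 1, -Pi.single a 1 - Pi.single b 1]
    else []

lemma isRootD6_of_mem_rootsInt {r : Fin 6 → ℤ} (hr : r ∈ rootsInt) : IsRootD6 (intVec r) := by
  have key : ∀ r ∈ rootsInt, r ⬝ᵥ r = 2 ∧ ∑ i, r i = 2 * ((∑ i, r i) / 2) := by
    decide +kernel
  obtain ⟨h₁, h₂⟩ := key r hr
  refine ⟨⟨fun i => ⟨r i, rfl⟩, (∑ i, r i) / 2, ?_⟩, by rw [bil6_intVec, h₁]; rfl⟩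
  simp only [intVec]
  exact_mod_cast h₂

lemma exists_mem_rootsInt {v : V6} (hv : IsRootD6 v) : ∃ r ∈ rootsInt, intVec r = v := by
  have key : ∀ a ∈ [-1, 0, 1], ∀ b ∈ [-1, 0, 1], ∀ c ∈ [-1, 0, 1], ∀ d ∈ [-1, 0, 1],
      ∀ e ∈ [-1, 0, 1], ∀ f ∈ [-1, 0, 1],
      a * a + b * b + c * c + d * d + e * e + f * f = 2 →
        (![a, b, c, d, e, f] : Fin 6 → ℤ) ∈ rootsInt := by
    decide +kernel
  obtain ⟨⟨hint, -⟩, hnorm⟩ := hv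
  choose m hm using hint
  obtain rfl : intVec m = v := funext fun i => (hm i).symm
  have hsum : m ⬝ᵥ m = 2 := by rw [bil6_intVec] at hnorm; exact_mod_cast hnorm
  have bound : ∀ i, m i ∈ [-1, 0, 1] := by
    intro i
    have : m i * m i ≤ 2 := hsum ▸
      Finset.single_le_sum (f := fun i => m i * m i) (fun i _ => mul_self_nonneg (m i))
        (Finset.mem_univ i)
    have h₁ : -1 ≤ m i := by nlinarith
    have h₂ : m i ≤ 1 := by nlinarith
    simp only [List.mem_cons, List.not_mem_nil, or_false]
    omega
  refine ⟨m, ?_, rfl⟩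
  have hm_eq : m = ![m 0, m 1, m 2, m 3, m 4, m 5] := by
    funext i; fin_cases i <;> rfl
  rw [hm_eq]
  refine key _ (bound 0) _ (bound 1) _ (bound 2) _ (bound 3) _ (bound 4) _ (bound 5) ?_
  simpa [dotProduct, Fin.sum_univ_succ, add_assoc] using hsum

/-- The vector `r` has the prescribed inner products. -/
def HasProducts (C : List ((Fin 6 → ℤ) × ℤ)) (r : Fin 6 → ℤ) : Prop :=
  ∀ p ∈ C, p.1 ⬝ᵥ r = p.2

instance (C : List ((Fin 6 → ℤ) × ℤ)) : DecidablePred (HasProducts C) :=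
  fun r => inferInstanceAs (Decidable (∀ p ∈ C, p.1 ⬝ᵥ r = p.2))

/-- Every root with the inner products prescribed by `C` is joined to `d` by a path of such
roots, consecutive ones having positive inner product. -/
def IsLinkedTo (C : List ((Fin 6 → ℤ) × ℤ)) (d : Fin 6 → ℤ) : Prop :=
  ∀ r ∈ rootsInt, HasProducts C r →
    ∃ s ∈ rootsInt, 0 < r ⬝ᵥ s ∧ HasProducts C s ∧
      ∃ t ∈ rootsInt, 0 < t ⬝ᵥ d ∧ 0 < s ⬝ᵥ t ∧ HasProducts C t

instance (C : List ((Fin 6 → ℤ) × ℤ)) (d : Fin 6 → ℤ) : Decidable (IsLinkedTo C d) := by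
  unfold IsLinkedTo; infer_instance

lemma exists_weyl_map_of_hasProducts {C : List ((Fin 6 → ℤ) × ℤ)} {r s : Fin 6 → ℤ}
    (hr : r ∈ rootsInt) (hs : s ∈ rootsInt) (hrs : 0 < r ⬝ᵥ s)
    (hCr : HasProducts C r) (hCs : HasProducts C s) :
    ∃ w ∈ WeylD6, w (intVec r) = intVec s ∧ ∀ p ∈ C, w (intVec p.1) = intVec p.1 := by
  obtain ⟨w, hw, hwr, hfix⟩ := exists_weyl_map_of_pos (isRootD6_of_mem_rootsInt hr)
    (isRootD6_of_mem_rootsInt hs) (by rw [bil6_intVec]; exact_mod_cast hrs)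
  refine ⟨w, hw, hwr, fun p hp => hfix _ ?_⟩
  rw [bil6_intVec, bil6_intVec, hCr p hp, hCs p hp]

lemma IsLinkedTo.exists_weyl_map {C : List ((Fin 6 → ℤ) × ℤ)} {d : Fin 6 → ℤ}
    (h : IsLinkedTo C d) (hd : d ∈ rootsInt) (hCd : HasProducts C d) {v : V6}
    (hv : IsRootD6 v) (hCv : ∀ p ∈ C, bil6 (intVec p.1) v = p.2) :
    ∃ w ∈ WeylD6, w v = intVec d ∧ ∀ p ∈ C, w (intVec p.1) = intVec p.1 := by
  obtain ⟨r, hr, rfl⟩ := exists_mem_rootsInt hv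
  have hCr : HasProducts C r := fun p hp => by
    have := hCv p hp
    rw [bil6_intVec] at this
    exact_mod_cast this
  obtain ⟨s, hs, hrs, hCs, t, ht, htd, hst, hCt⟩ := h r hr hCr
  obtain ⟨w₁, hw₁, h₁, hfix₁⟩ := exists_weyl_map_of_hasProducts hr hs hrs hCr hCs
  obtain ⟨w₂, hw₂, h₂, hfix₂⟩ := exists_weyl_map_of_hasProducts hs ht hst hCs hCt
  obtain ⟨w₃, hw₃, h₃, hfix₃⟩ := exists_weyl_map_of_hasProducts ht hd htd hCt hCd
  refine ⟨w₃ * (w₂ * w₁), mul_mem hw₃ (mul_mem hw₂ hw₁), ?_, fun p hp => ?_⟩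
  · simp only [LinearEquiv.mul_apply, h₁, h₂, h₃]
  · simp only [LinearEquiv.mul_apply, hfix₁ p hp, hfix₂ p hp, hfix₃ p hp]

/-- The simple roots of `A₅`, and the first five simple roots of `D₆`, in integer coordinates. -/
def simpleRootInt (i : Fin 5) : Fin 6 → ℤ := Pi.single i.castSucc 1 - Pi.single i.succ 1

/-- `v` is a system of roots of `D₆` with the Gram matrix of the simple roots of `A₅`. -/
structure IsA5System (v : Fin 5 → V6) : Prop where
  isRoot : ∀ i, IsRootD6 (v i)
  gram : ∀ i j, bil6 (v i) (v j) = ((simpleRootInt i ⬝ᵥ simpleRootInt j : ℤ) : ℚ)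

lemma IsA5System.map {w : V6 ≃ₗ[ℚ] V6} (hw : w ∈ WeylD6) {v : Fin 5 → V6}
    (hv : IsA5System v) : IsA5System fun i => w (v i) :=
  ⟨fun i => (hv.isRoot i).map hw,
    fun i j => (bil6_map_of_mem_WeylD6 hw _ _).trans (hv.gram i j)⟩

/-- If `v` starts with the simple roots of index less than `k`, then a Weyl group element fixing
these moves `v k` to the next simple root, provided that all admissible roots are linked to it.
Further vectors `E` orthogonal to `v k` may be used to restrict the admissible roots. -/
lemma IsA5System.exists_weyl_extend {v : Fin 5 → V6} (hv : IsA5System v) (k : Fin 5)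
    (E : List (Fin 6 → ℤ)) (hlt : ∀ i < k, v i = intVec (simpleRootInt i))
    (hE : ∀ x ∈ E, bil6 (intVec x) (v k) = 0 ∧ x ⬝ᵥ simpleRootInt k = 0)
    (hlink : IsLinkedTo (E.map (fun x => (x, 0)) ++
      ((List.finRange 5).filter (· < k)).map
        fun i => (simpleRootInt i, simpleRootInt i ⬝ᵥ simpleRootInt k)) (simpleRootInt k)) :
    ∃ w ∈ WeylD6, ∀ i ≤ k, w (v i) = intVec (simpleRootInt i) := by
  have hmem : ∀ k, simpleRootInt k ∈ rootsInt := by decide +kernel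
  obtain ⟨w, hw, hwk, hfix⟩ := hlink.exists_weyl_map (hmem k)
    (fun p hp => by
      simp only [List.mem_append, List.mem_map] at hp
      obtain ⟨x, hx, rfl⟩ | ⟨i, -, rfl⟩ := hp
      · exact (hE x hx).2
      · rfl)
    (hv.isRoot k)
    (fun p hp => by
      simp only [List.mem_append, List.mem_map, List.mem_filter, decide_eq_true_eq] at hp
      obtain ⟨x, hx, rfl⟩ | ⟨i, ⟨-, hi⟩, rfl⟩ := hp
      · exact_mod_cast (hE x hx).1
      · rw [← hlt i hi]
        exact hv.gram i k)
  refine ⟨w, hw, fun i hi => ?_⟩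
  obtain rfl | hi := hi.eq_or_lt
  · exact hwk
  · rw [hlt i hi]
    exact hfix (simpleRootInt i, _) (List.mem_append_right _
      (List.mem_map_of_mem (List.mem_filter.2 ⟨List.mem_finRange i, by simpa using hi⟩)))

lemma IsA5System.exists_weyl_zero {v : Fin 5 → V6} (hv : IsA5System v) :
    ∃ w ∈ WeylD6, ∀ i ≤ 0, w (v i) = intVec (simpleRootInt i) :=
  hv.exists_weyl_extend 0 [] (by simp) (by simp) (by decide +kernel)

lemma IsA5System.exists_weyl_one {v : Fin 5 → V6} (hv : IsA5System v) :
    ∃ w ∈ WeylD6, ∀ i ≤ 1, w (v i) = intVec (simpleRootInt i) := by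
  obtain ⟨w, hw, h⟩ := hv.exists_weyl_zero
  obtain ⟨w', hw', h'⟩ := (hv.map hw).exists_weyl_extend 1 [] (fun i hi => h i (by omega))
    (by simp) (by decide +kernel)
  exact ⟨w' * w, mul_mem hw' hw, h'⟩

/-- The sum `e₁ + e₂` is orthogonal to the third root: this root would otherwise be `-e₁ - e₂`,
which leaves no room for the fourth one. -/
lemma IsA5System.bil6_two_eq_zero {v : Fin 5 → V6} (hv : IsA5System v)
    (h : ∀ i ≤ 1, v i = intVec (simpleRootInt i)) :
    bil6 (intVec ![1, 1, 0, 0, 0, 0]) (v 2) = 0 := by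
  have key : ∀ r ∈ rootsInt, simpleRootInt 0 ⬝ᵥ r = 0 → simpleRootInt 1 ⬝ᵥ r = -1 →
      ∀ s ∈ rootsInt, simpleRootInt 0 ⬝ᵥ s = 0 → r ⬝ᵥ s = -1 →
        ![1, 1, 0, 0, 0, 0] ⬝ᵥ r = 0 := by
    decide +kernel
  obtain ⟨r, hr, hrv⟩ := exists_mem_rootsInt (hv.isRoot 2)
  obtain ⟨s, hs, hsv⟩ := exists_mem_rootsInt (hv.isRoot 3)
  have h02 := hv.gram 0 2
  have h12 := hv.gram 1 2
  have h03 := hv.gram 0 3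
  have h23 := hv.gram 2 3
  rw [h 0 (by decide), ← hrv, bil6_intVec, Int.cast_inj] at h02
  rw [h 1 (by decide), ← hrv, bil6_intVec, Int.cast_inj] at h12
  rw [h 0 (by decide), ← hsv, bil6_intVec, Int.cast_inj] at h03
  rw [← hrv, ← hsv, bil6_intVec, Int.cast_inj] at h23
  rw [← hrv, bil6_intVec, key r hr (h02.trans (by decide)) (h12.trans (by decide)) s hs
    (h03.trans (by decide)) (h23.trans (by decide)), Int.cast_zero]

lemma IsA5System.exists_weyl_two {v : Fin 5 → V6} (hv : IsA5System v) :
    ∃ w ∈ WeylD6, ∀ i ≤ 2, w (v i) = intVec (simpleRootInt i) := by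
  obtain ⟨w, hw, h⟩ := hv.exists_weyl_one
  obtain ⟨w', hw', h'⟩ := (hv.map hw).exists_weyl_extend 2 [![1, 1, 0, 0, 0, 0]]
    (fun i hi => h i (by omega))
    (fun x hx => by
      obtain rfl := List.mem_singleton.1 hx
      exact ⟨(hv.map hw).bil6_two_eq_zero h, by decide⟩)
    (by decide +kernel)
  exact ⟨w' * w, mul_mem hw' hw, h'⟩

lemma IsA5System.exists_weyl_three {v : Fin 5 → V6} (hv : IsA5System v) :
    ∃ w ∈ WeylD6, ∀ i ≤ 3, w (v i) = intVec (simpleRootInt i) := by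
  obtain ⟨w, hw, h⟩ := hv.exists_weyl_two
  obtain ⟨w', hw', h'⟩ := (hv.map hw).exists_weyl_extend 3 [] (fun i hi => h i (by omega))
    (by simp) (by decide +kernel)
  exact ⟨w' * w, mul_mem hw' hw, h'⟩

/-- The last root is determined up to sign of its last coordinate by the first four. -/
lemma IsA5System.four_eq {v : Fin 5 → V6} (hv : IsA5System v)
    (h : ∀ i ≤ 3, v i = intVec (simpleRootInt i)) : v 4 = d5 ∨ v 4 = d6 := by
  have key : ∀ r ∈ rootsInt,
      (∀ i ≤ (3 : Fin 5), simpleRootInt i ⬝ᵥ r = simpleRootInt i ⬝ᵥ simpleRootInt 4) →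
        r = ![0, 0, 0, 0, 1, -1] ∨ r = ![0, 0, 0, 0, 1, 1] := by
    decide +kernel
  obtain ⟨r, hr, hrv⟩ := exists_mem_rootsInt (hv.isRoot 4)
  rw [← hrv]
  refine (key r hr fun i hi => ?_).imp ?_ ?_
  · have := hv.gram i 4
    rwa [h i hi, ← hrv, bil6_intVec, Int.cast_inj] at this
  all_goals
    rintro rfl
    funext i
    fin_cases i <;> simp [intVec, d5, d6]

/-- The simple roots of `A₅` as elements of the lattice. -/
def simpleRootA5 (i : Fin 5) : A5 :=
  ⟨intVec (simpleRootInt i), fun j => ⟨simpleRootInt i j, rfl⟩, by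
    have key : ∀ i, ∑ j, simpleRootInt i j = 0 := by decide +kernel
    simp only [intVec]
    exact_mod_cast key i⟩

lemma span_simpleRootA5 : Submodule.span ℤ (Set.range simpleRootA5) = ⊤ := by
  refine eq_top_iff.2 fun a _ => ?_
  obtain ⟨x, hx, hsum⟩ := a
  have hx' := hx
  choose m hm using hx'
  refine (Submodule.mem_span_range_iff_exists_fun ℤ).2
    ⟨![m 0, m 0 + m 1, m 0 + m 1 + m 2, m 0 + m 1 + m 2 + m 3,
      m 0 + m 1 + m 2 + m 3 + m 4], Subtype.ext ?_⟩
  simp only [hm, Fin.sum_univ_six] at hsum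
  funext j
  fin_cases j <;>
    simp [Fin.sum_univ_five, simpleRootA5, intVec, simpleRootInt, hm,
      Fin.ext_iff] <;> linarith

/-- Every primitive embedding of the root lattice `A₅` into `D₆`
is equivalent, under the Weyl group `W(D₆)`, to `i₁(A₅)` or `i₂(A₅)`. -/
theorem two_primitive_embeddings_of_A5_in_D6
    (φ : A5 →ₗ[ℤ] V6)
    (hinj : Function.Injective φ)
    (hrange : ∀ a : A5, φ a ∈ D6)
    (hform : ∀ a b : A5, bil6 (φ a) (φ b) = bil6 (a : V6) (b : V6))
    (hprim : ∀ v ∈ D6, ∀ n : ℤ, n ≠ 0 → n • v ∈ LinearMap.range φ →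
      v ∈ LinearMap.range φ) :
    ∃ w ∈ WeylD6,
      ⇑w '' (LinearMap.range φ : Set V6) = (i1A5 : Set V6) ∨
      ⇑w '' (LinearMap.range φ : Set V6) = (i2A5 : Set V6) := by
  have hsystem : IsA5System fun i => φ (simpleRootA5 i) := by
    have hgram : ∀ i j, bil6 (φ (simpleRootA5 i)) (φ (simpleRootA5 j)) =
        ((simpleRootInt i ⬝ᵥ simpleRootInt j : ℤ) : ℚ) :=
      fun i j => (hform _ _).trans (bil6_intVec _ _)
    have hself : ∀ i, simpleRootInt i ⬝ᵥ simpleRootInt i = 2 := by decide +kernel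
    exact ⟨fun i => ⟨hrange _, by rw [hgram, hself]; rfl⟩, hgram⟩
  obtain ⟨w, hw, h⟩ := hsystem.exists_weyl_three
  have himage : ⇑w '' (LinearMap.range φ : Set V6) = (Submodule.span ℤ
      {d1, d2, d3, d4, w (φ (simpleRootA5 4))} : Submodule ℤ V6) := by
    let wℤ : V6 →ₗ[ℤ] V6 := w.toLinearMap.restrictScalars ℤ
    have hd : ∀ i, (![d1, d2, d3, d4, d5] : Fin 5 → V6) i = intVec (simpleRootInt i) := by
      intro i
      funext j
      fin_cases i <;> fin_cases j <;>
        simp [d1, d2, d3, d4, d5, intVec, simpleRootInt, Fin.ext_iff]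
    have hset : wℤ '' (φ '' Set.range simpleRootA5) =
        {d1, d2, d3, d4, w (φ (simpleRootA5 4))} := by
      rw [← Set.range_comp, ← Set.range_comp, show d1 = _ from (hd 0).trans (h 0 (by decide)).symm,
        show d2 = _ from (hd 1).trans (h 1 (by decide)).symm,
        show d3 = _ from (hd 2).trans (h 2 (by decide)).symm,
        show d4 = _ from (hd 3).trans (h 3 (by decide)).symm]
      ext x
      simp [Fin.exists_fin_succ, wℤ, eq_comm]
    rw [← hset, ← Submodule.map_span, ← Submodule.map_span, span_simpleRootA5,
      Submodule.map_top]
    rfl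
  refine ⟨w, hw, ((hsystem.map hw).four_eq h).imp (fun h4 => ?_) fun h4 => ?_⟩
  · rw [himage, h4, i1A5]
  · rw [himage, h4, i2A5]
end
end

section
/- For every transposition τ of the four ℚ⁶-factors of ℚ²⁴ = (ℚ⁶)⁴, the linear isometry τ∘G of ℚ²⁴, where G = g⊕g⊕g⊕g acts by g on each factor, maps the Niemeier lattice N(D₆⁴) onto itself; in particular τ∘G is an automorphism of N(D₆⁴). -/
noncomputable section

/-- The nontrivial Dynkin diagram automorphism `g` of `D₆`:
`g(e₆) = -e₆` and `g(eᵢ) = eᵢ` for `i ≤ 5` (it interchanges `d₅` and `d₆`). -/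
def gmap (x : V6) : V6 := fun i => if i = 5 then -x 5 else x i

/-- The glue vector `δ₆ = ½(d₁+2d₂+3d₃+4d₄+2d₅+3d₆)`, representing the class `[1]`. -/
def delta6 : V6 :=
  (1/2 : ℚ) • (d1 + (2 : ℚ) • d2 + (3 : ℚ) • d3 + (4 : ℚ) • d4 + (2 : ℚ) • d5 + (3 : ℚ) • d6)

/-- The glue vector `δ̄₆ = d₁+d₂+d₃+d₄+½(d₅+d₆)`, representing the class `[2]`. -/
def deltaBar6 : V6 := d1 + d2 + d3 + d4 + (1/2 : ℚ) • (d5 + d6)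

/-- The glue vector `δ̃₆ = ½(d₁+2d₂+3d₃+4d₄+3d₅+2d₆)`, representing the class `[3]`. -/
def deltaTilde6 : V6 :=
  (1/2 : ℚ) • (d1 + (2 : ℚ) • d2 + (3 : ℚ) • d3 + (4 : ℚ) • d4 + (3 : ℚ) • d5 + (2 : ℚ) • d6)

abbrev V24 : Type := Fin 4 → V6

/-- The standard bilinear form on `ℚ²⁴ = (ℚ⁶)⁴`. -/
def bil24 (x y : V24) : ℚ := ∑ k, bil6 (x k) (y k)

/-- The glue components `γ₀ = 0`, `γ₁ = δ₆`, `γ₂ = δ̄₆`, `γ₃ = δ̃₆`. -/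
def gam : Fin 4 → V6 := ![0, delta6, deltaBar6, deltaTilde6]

/-- The sixteen codewords of the glue code of `N(D₆⁴)`. -/
def codes : Set (Fin 4 → Fin 4) :=
  {![0,0,0,0], ![0,1,2,3], ![0,3,1,2], ![0,2,3,1],
   ![1,1,1,1], ![1,0,3,2], ![1,3,2,0], ![1,2,0,3],
   ![2,2,2,2], ![2,0,1,3], ![2,3,0,1], ![2,1,3,0],
   ![3,3,3,3], ![3,0,2,1], ![3,1,0,2], ![3,2,1,0]}

/-- The Niemeier lattice `N(D₆⁴)`: the `ℤ`-submodule of `ℚ²⁴` generated by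
`D₆ ⊕ D₆ ⊕ D₆ ⊕ D₆` together with the sixteen glue vectors. -/
def NL : Submodule ℤ V24 :=
  Submodule.span ℤ ({x : V24 | ∀ k, x k ∈ D6} ∪ ((fun c : Fin 4 → Fin 4 => fun k => gam (c k)) '' codes))

theorem gmap_gmap (x : V6) : gmap (gmap x) = x := by
  ext i
  by_cases h : i = 5 <;> simp [gmap, h]

theorem gmap_mem_D6 {x : V6} (hx : x ∈ D6) : gmap x ∈ D6 := by
  obtain ⟨hint, k, hk⟩ := hx
  obtain ⟨m, hm⟩ := hint 5
  refine ⟨fun i => ?_, k - m, ?_⟩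
  · by_cases h : i = 5
    · exact ⟨-m, by simp [gmap, h, hm]⟩
    · simpa [gmap, h] using hint i
  · have hsum : ∑ i, gmap x i = (∑ i, x i) - 2 * x 5 := by
      simp only [Fin.sum_univ_six, gmap, Fin.reduceEq, if_true, if_false]
      ring
    rw [hsum, hk, hm]
    push_cast
    ring

theorem delta6_eq : delta6 = ![1/2, 1/2, 1/2, 1/2, 1/2, 1/2] := by
  norm_num [delta6, d1, d2, d3, d4, d5, d6]

theorem deltaBar6_eq : deltaBar6 = ![1, 0, 0, 0, 0, 0] := by
  norm_num [deltaBar6, d1, d2, d3, d4, d5, d6]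

theorem deltaTilde6_eq : deltaTilde6 = ![1/2, 1/2, 1/2, 1/2, 1/2, -1/2] := by
  norm_num [deltaTilde6, d1, d2, d3, d4, d5, d6]

theorem gmap_vec (a b c d e f : ℚ) : gmap ![a, b, c, d, e, f] = ![a, b, c, d, e, -f] := by
  ext i
  fin_cases i <;> rfl

/-- `g` fixes the glue classes `0` and `2` and interchanges `1` and `3`. -/
theorem gmap_gam (a : Fin 4) : gmap (gam a) = gam (Equiv.swap 1 3 a) := by
  fin_cases a
  · change gmap 0 = 0
    ext i
    simp [gmap]
  · change gmap delta6 = deltaTilde6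
    rw [delta6_eq, deltaTilde6_eq, gmap_vec, neg_div]
  · change gmap deltaBar6 = deltaBar6
    rw [deltaBar6_eq, gmap_vec, neg_zero]
  · change gmap deltaTilde6 = delta6
    rw [delta6_eq, deltaTilde6_eq, gmap_vec, neg_div, neg_neg]

theorem swap_glue_mem_codes {i j : Fin 4} (hij : i ≠ j) {c : Fin 4 → Fin 4} (hc : c ∈ codes) :
    (fun k => Equiv.swap 1 3 (c (Equiv.swap i j k))) ∈ codes := by
  simp only [codes, Set.mem_insert_iff, Set.mem_singleton_iff] at hc ⊢
  revert i j
  rcases hc with rfl | rfl | rfl | rfl | rfl | rfl | rfl | rfl | rfl | rfl | rfl | rfl | rfl |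
    rfl | rfl | rfl <;> decide

/-- The map `π ∘ G` on `ℚ²⁴`, for a permutation `π` of the factors. -/
def permComp (π : Equiv.Perm (Fin 4)) : V24 →ₗ[ℤ] V24 where
  toFun x k := gmap (x (π⁻¹ k))
  map_add' x y := by
    ext k i
    by_cases h : i = 5 <;> simp [gmap, h, add_comm]
  map_smul' c x := by
    ext k i
    by_cases h : i = 5 <;> simp [gmap, h]

theorem permComp_swap_mem_NL {i j : Fin 4} (hij : i ≠ j) {x : V24} (hx : x ∈ NL) :
    permComp (Equiv.swap i j) x ∈ NL := by
  suffices h : NL ≤ NL.comap (permComp (Equiv.swap i j)) from h hx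
  refine Submodule.span_le.mpr ?_
  rintro y (hy | ⟨c, hc, rfl⟩)
  · exact Submodule.subset_span (Or.inl fun k => gmap_mem_D6 (hy _))
  · refine Submodule.subset_span (Or.inr ⟨_, swap_glue_mem_codes hij hc, ?_⟩)
    funext k
    exact (gmap_gam _).symm

/-- For every transposition `τ` of the four `ℚ⁶`-factors of `ℚ²⁴`, the map
`τ ∘ G`, where `G = g ⊕ g ⊕ g ⊕ g`, maps the Niemeier lattice `N(D₆⁴)` onto itself. -/
theorem transposition_comp_g_preserves_NiemeierD6pow4
    (τ : Equiv.Perm (Fin 4)) (hτ : τ.IsSwap) :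
    (fun (x : V24) (k : Fin 4) => gmap (x (τ⁻¹ k))) '' (NL : Set V24) = (NL : Set V24) := by
  obtain ⟨i, j, hij, rfl⟩ := hτ
  refine Set.Subset.antisymm ?_ fun x hx => ?_
  · rintro _ ⟨x, hx, rfl⟩
    exact permComp_swap_mem_NL hij hx
  · refine ⟨permComp (Equiv.swap i j) x, permComp_swap_mem_NL hij hx, ?_⟩
    funext k
    simp [permComp, gmap_gmap]
end
end

section
/- The two primitive embeddings of A₅ ⊕ A₁ into N(D₆⁴) given by (i₁(A₅), d₆, 0, 0) and (i₂(A₅), d₅, 0, 0) are isomorphic by an automorphism of N(D₆⁴): there exists a linear isometry σ of ℚ²⁴ with σ(N(D₆⁴)) = N(D₆⁴) such that σ maps the sublattice i₁(A₅) × {0} × {0} × {0} onto i₂(A₅) × {0} × {0} × {0} and maps {0} × ℤd₆ × {0} × {0} onto {0} × ℤd₅ × {0} × {0}. -/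
noncomputable section

/-- The diagram automorphism `gmap` as a `ℚ`-linear map. -/
def gLin : V6 →ₗ[ℚ] V6 where
  toFun := gmap
  map_add' x y := by
    ext i
    by_cases h : i = 5 <;> simp [gmap, h, add_comm]
  map_smul' c x := by
    ext i
    by_cases h : i = 5 <;> simp [gmap, h]

theorem gLin_apply (x : V6) (i : Fin 6) : gLin x i = if i = 5 then -x 5 else x i := rfl

theorem gLin_gLin (x : V6) : gLin (gLin x) = x := by
  ext i
  by_cases h : i = 5 <;> simp [gLin_apply, h]

theorem bil6_gLin (x y : V6) : bil6 (gLin x) (gLin y) = bil6 x y := by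
  refine Finset.sum_congr rfl fun i _ => ?_
  by_cases h : i = 5 <;> simp [gLin_apply, h]

theorem gLin_d1 : gLin d1 = d1 := by
  ext i; fin_cases i <;> simp [gLin_apply, d1]

theorem gLin_d2 : gLin d2 = d2 := by
  ext i; fin_cases i <;> simp [gLin_apply, d2]

theorem gLin_d3 : gLin d3 = d3 := by
  ext i; fin_cases i <;> simp [gLin_apply, d3]

theorem gLin_d4 : gLin d4 = d4 := by
  ext i; fin_cases i <;> simp [gLin_apply, d4]

theorem gLin_d5 : gLin d5 = d6 := by
  ext i; fin_cases i <;> simp [gLin_apply, d5, d6]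

theorem gLin_d6 : gLin d6 = d5 := by
  rw [← gLin_d5, gLin_gLin]

theorem gLin_mem_D6 {x : V6} (hx : x ∈ D6) : gLin x ∈ D6 := by
  obtain ⟨hint, k, hk⟩ := hx
  refine ⟨fun i => ?_, ?_⟩
  · obtain ⟨m, hm⟩ := hint i
    by_cases h : i = 5
    · subst h
      exact ⟨-m, by simp [gLin_apply, hm]⟩
    · exact ⟨m, by simp [gLin_apply, h, hm]⟩
  · obtain ⟨m, hm⟩ := hint 5
    refine ⟨k - m, ?_⟩
    simp only [Fin.sum_univ_six] at hk
    simp [Fin.sum_univ_six, gLin_apply]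
    linarith

theorem gLin_mem_i2A5 {x : V6} (hx : x ∈ i1A5) : gLin x ∈ i2A5 := by
  have h : i1A5 ≤ i2A5.comap (gLin.restrictScalars ℤ) := by
    refine Submodule.span_le.2 ?_
    rintro _ (rfl | rfl | rfl | rfl | rfl) <;>
      refine Submodule.subset_span ?_ <;>
      simp [gLin_d1, gLin_d2, gLin_d3, gLin_d4, gLin_d5]
  exact h hx

theorem gLin_mem_i1A5 {x : V6} (hx : x ∈ i2A5) : gLin x ∈ i1A5 := by
  have h : i2A5 ≤ i1A5.comap (gLin.restrictScalars ℤ) := by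
    refine Submodule.span_le.2 ?_
    rintro _ (rfl | rfl | rfl | rfl | rfl) <;>
      refine Submodule.subset_span ?_ <;>
      simp [gLin_d1, gLin_d2, gLin_d3, gLin_d4, gLin_d6]
  exact h hx

/-- `gLin` exchanges the glue classes `[1]` and `[3]` and fixes `[0]` and `[2]`. -/
theorem gLin_gam (c : Fin 4) : gLin (gam c) = gam (Equiv.swap 1 3 c) := by
  have h2 : (Equiv.swap 1 3 : Equiv.Perm (Fin 4)) 2 = 2 := by decide
  have h0 : (Equiv.swap 1 3 : Equiv.Perm (Fin 4)) 0 = 0 := by decide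
  fin_cases c <;>
    simp [gam, h0, h2, delta6, deltaBar6, deltaTilde6, gLin_d1, gLin_d2, gLin_d3, gLin_d4,
      gLin_d5, gLin_d6] <;>
    abel

/-- The automorphism of `ℚ²⁴` applying `gLin` to every factor and exchanging the last two. -/
def gSwap : V24 →ₗ[ℚ] V24 :=
  LinearMap.pi fun k => gLin ∘ₗ LinearMap.proj (Equiv.swap 2 3 k)

theorem gSwap_apply (x : V24) (k : Fin 4) : gSwap x k = gLin (x (Equiv.swap 2 3 k)) := rfl

theorem gSwap_zero (x : V24) : gSwap x 0 = gLin (x 0) := rfl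

theorem gSwap_one (x : V24) : gSwap x 1 = gLin (x 1) := rfl

theorem gSwap_two (x : V24) : gSwap x 2 = gLin (x 3) := rfl

theorem gSwap_three (x : V24) : gSwap x 3 = gLin (x 2) := rfl

theorem gSwap_involutive : Function.Involutive gSwap := fun x => by
  ext1 k
  simp [gSwap_apply, gLin_gLin]

theorem bil24_gSwap (x y : V24) : bil24 (gSwap x) (gSwap y) = bil24 x y := by
  simp only [bil24, gSwap_apply, bil6_gLin]
  exact Equiv.sum_comp (Equiv.swap 2 3) fun k => bil6 (x k) (y k)

theorem swap_comp_comp_swap_mem_codes {c : Fin 4 → Fin 4} (hc : c ∈ codes) :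
    (fun k => Equiv.swap 1 3 (c (Equiv.swap 2 3 k))) ∈ codes := by
  simp only [codes, Set.mem_insert_iff, Set.mem_singleton_iff] at hc ⊢
  rcases hc with rfl | rfl | rfl | rfl | rfl | rfl | rfl | rfl | rfl | rfl | rfl | rfl | rfl |
    rfl | rfl | rfl <;> decide

theorem gSwap_mem_NL {x : V24} (hx : x ∈ NL) : gSwap x ∈ NL := by
  have h : NL ≤ NL.comap (gSwap.restrictScalars ℤ) := by
    refine Submodule.span_le.2 ?_
    rintro y (hy | ⟨c, hc, rfl⟩)
    · exact Submodule.subset_span (Or.inl fun k => gLin_mem_D6 (hy _))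
    · refine Submodule.subset_span (Or.inr ⟨_, swap_comp_comp_swap_mem_codes hc, ?_⟩)
      ext1 k
      exact (gLin_gam _).symm
  exact h hx

theorem gSwap_image_eq {s t : Set V24} (hst : ∀ x ∈ s, gSwap x ∈ t)
    (hts : ∀ x ∈ t, gSwap x ∈ s) : gSwap '' s = t :=
  (Set.image_subset_iff.2 hst).antisymm fun x hx => ⟨gSwap x, hts x hx, gSwap_involutive x⟩

/-- The two primitive embeddings of `A₅ ⊕ A₁` in `N(D₆⁴)` given by
`(i₁(A₅), d₆, 0, 0)` and `(i₂(A₅), d₅, 0, 0)` are isomorphic by an automorphism of `N(D₆⁴)`: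
there is a linear isometry `σ` of `ℚ²⁴` preserving `N(D₆⁴)` which carries
`i₁(A₅) × {0} × {0} × {0}` onto `i₂(A₅) × {0} × {0} × {0}` and
`{0} × ℤd₆ × {0} × {0}` onto `{0} × ℤd₅ × {0} × {0}`. -/
theorem embeddings_isomorphic_by_aut_NiemeierD6pow4 :
    ∃ σ : V24 →ₗ[ℚ] V24,
      (∀ x y : V24, bil24 (σ x) (σ y) = bil24 x y) ∧
      ⇑σ '' (NL : Set V24) = (NL : Set V24) ∧
      ⇑σ '' {x : V24 | x 0 ∈ i1A5 ∧ x 1 = 0 ∧ x 2 = 0 ∧ x 3 = 0} =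
        {x : V24 | x 0 ∈ i2A5 ∧ x 1 = 0 ∧ x 2 = 0 ∧ x 3 = 0} ∧
      ⇑σ '' {x : V24 | x 0 = 0 ∧ (∃ c : ℤ, x 1 = c • d6) ∧ x 2 = 0 ∧ x 3 = 0} =
        {x : V24 | x 0 = 0 ∧ (∃ c : ℤ, x 1 = c • d5) ∧ x 2 = 0 ∧ x 3 = 0} := by
  refine ⟨gSwap, bil24_gSwap, gSwap_image_eq (fun _ => gSwap_mem_NL) (fun _ => gSwap_mem_NL),
    gSwap_image_eq ?_ ?_, gSwap_image_eq ?_ ?_⟩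
  · rintro x ⟨h0, h1, h2, h3⟩
    simpa [gSwap_zero, gSwap_one, gSwap_two, gSwap_three, h1, h2, h3] using gLin_mem_i2A5 h0
  · rintro x ⟨h0, h1, h2, h3⟩
    simpa [gSwap_zero, gSwap_one, gSwap_two, gSwap_three, h1, h2, h3] using gLin_mem_i1A5 h0
  · rintro x ⟨h0, ⟨c, h1⟩, h2, h3⟩
    refine ⟨by simp [gSwap_zero, h0], ⟨c, ?_⟩, by simp [gSwap_two, h3], by simp [gSwap_three, h2]⟩
    rw [gSwap_one, h1, map_zsmul, gLin_d6]
  · rintro x ⟨h0, ⟨c, h1⟩, h2, h3⟩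
    refine ⟨by simp [gSwap_zero, h0], ⟨c, ?_⟩, by simp [gSwap_two, h3], by simp [gSwap_three, h2]⟩
    rw [gSwap_one, h1, map_zsmul, gLin_d5]
end
end

section
/- The map Γ = γ₀ ⊕ γ₀ ⊕ id on ℚ¹⁰ ⊕ ℚ¹⁰ ⊕ ℚ⁶, acting by the A₉ diagram automorphism γ₀ on each A₉-factor and trivially on the D₆-factor, maps the Niemeier lattice N(A₉²D₆) onto itself; in particular Γ is an automorphism of N(A₉²D₆) of order 2 lying in G₁(L_root). -/
noncomputable section

abbrev V10 : Type := Fin 10 → ℚ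

/-- The standard bilinear form on `ℚ¹⁰`. -/
def bil10 (x y : V10) : ℚ := ∑ i, x i * y i

/-- The simple roots `aᵢ = eᵢ - eᵢ₊₁` of `A₉` (here `a i` is `a_{i+1}` for `i : Fin 9`). -/
def a (i : Fin 9) : V10 :=
  fun j => if (j : ℕ) = (i : ℕ) then 1 else if (j : ℕ) = (i : ℕ) + 1 then -1 else 0

/-- The `A₉` root lattice: integer vectors in `ℚ¹⁰` with coordinate sum zero. -/
def A9 : Submodule ℤ V10 where
  carrier := {x | (∀ i, ∃ m : ℤ, x i = (m : ℚ)) ∧ (∑ i, x i) = 0}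
  add_mem' := by
    rintro x y ⟨hx1, hx2⟩ ⟨hy1, hy2⟩
    refine ⟨fun i => ?_, ?_⟩
    · obtain ⟨m, hm⟩ := hx1 i
      obtain ⟨m', hm'⟩ := hy1 i
      exact ⟨m + m', by push_cast [Pi.add_apply, hm, hm']; ring⟩
    · have : (∑ i, (x + y) i) = (∑ i, x i) + ∑ i, y i := by
        simp [Pi.add_apply, Finset.sum_add_distrib]
      rw [this, hx2, hy2]; ring
  zero_mem' := ⟨fun i => ⟨0, by simp⟩, by simp⟩
  smul_mem' := by
    rintro c x ⟨hx1, hx2⟩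
    refine ⟨fun i => ?_, ?_⟩
    · obtain ⟨m, hm⟩ := hx1 i
      refine ⟨c * m, ?_⟩
      have : (c • x) i = (c : ℚ) * x i := by simp [Pi.smul_apply, zsmul_eq_mul]
      rw [this, hm]; push_cast; ring
    · have : (∑ i, (c • x) i) = (c : ℚ) * ∑ i, x i := by
        simp [Pi.smul_apply, zsmul_eq_mul, Finset.mul_sum]
      rw [this, hx2]; ring

/-- The glue generator `α = (1/10)(9a₁+8a₂+7a₃+6a₄+5a₅+4a₆+3a₇+2a₈+a₉)` of `A₉*/A₉`. -/
def alphaA9 : V10 := (1/10 : ℚ) • ∑ i : Fin 9, ((9 : ℚ) - (i : ℕ)) • a i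

/-- The nontrivial diagram automorphism `γ₀` of `A₉`: `eᵢ ↦ -e₁₁₋ᵢ` (so `aᵢ ↦ a₁₀₋ᵢ`). -/
def gamma0 (x : V10) : V10 := fun j => -(x j.rev)

abbrev V26 : Type := V10 × V10 × V6

/-- The standard bilinear form on `ℚ²⁶ = ℚ¹⁰ ⊕ ℚ¹⁰ ⊕ ℚ⁶`. -/
def bil26 (x y : V26) : ℚ := bil10 x.1 y.1 + bil10 x.2.1 y.2.1 + bil6 x.2.2 y.2.2

/-- The Niemeier lattice `N(A₉²D₆)`: the `ℤ`-submodule of `ℚ²⁶` generated by `A₉ ⊕ A₉ ⊕ D₆`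
together with the glue vectors `(2α,4α,0)`, `(5α,0,δ₆)` and `(0,5α,δ̃₆)`. -/
def NL2 : Submodule ℤ V26 :=
  Submodule.span ℤ ({p : V26 | p.1 ∈ A9 ∧ p.2.1 ∈ A9 ∧ p.2.2 ∈ D6} ∪
    {((2 : ℚ) • alphaA9, (4 : ℚ) • alphaA9, 0),
     ((5 : ℚ) • alphaA9, 0, delta6),
     (0, (5 : ℚ) • alphaA9, deltaTilde6)})

theorem alphaA9_apply (j : Fin 10) : alphaA9 j = if j = 0 then 9 / 10 else -1 / 10 := by
  fin_cases j <;> norm_num [alphaA9, a, Fin.sum_univ_succ]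

theorem ten_smul_alphaA9_mem : (10 : ℚ) • alphaA9 ∈ A9 := by
  refine ⟨fun i => ⟨if i = 0 then 9 else -1, ?_⟩, ?_⟩
  · rw [Pi.smul_apply, alphaA9_apply]
    split_ifs <;> norm_num
  · norm_num [alphaA9_apply, Fin.sum_univ_succ, Fin.succ_ne_zero]

theorem sum_gamma0 (x : V10) : ∑ i, gamma0 x i = -∑ i, x i := by
  simp only [gamma0, Finset.sum_neg_distrib]
  exact congrArg Neg.neg (Equiv.sum_comp Fin.revPerm x)

/-- The diagram automorphism acts as `-1` on the glue group `A₉*/A₉`. -/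
theorem gamma0_alphaA9_add_mem : gamma0 alphaA9 + alphaA9 ∈ A9 := by
  refine ⟨fun i => ⟨if i = 0 then 1 else if i = 9 then -1 else 0, ?_⟩, ?_⟩
  · fin_cases i <;> norm_num [gamma0, alphaA9_apply, Fin.rev, Fin.ext_iff]
  · simp only [Pi.add_apply, Finset.sum_add_distrib, sum_gamma0, neg_add_cancel]

theorem gamma0_add (x y : V10) : gamma0 (x + y) = gamma0 x + gamma0 y := by
  ext j
  simp only [gamma0, Pi.add_apply, neg_add]

theorem gamma0_smul (c : ℚ) (x : V10) : gamma0 (c • x) = c • gamma0 x := by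
  ext j
  simp only [gamma0, Pi.smul_apply, smul_neg]

theorem gamma0_zero : gamma0 0 = 0 := by
  ext j
  simp [gamma0]

theorem gamma0_gamma0 (x : V10) : gamma0 (gamma0 x) = x := by
  ext j
  simp [gamma0]

theorem gamma0_mem_A9 {x : V10} (hx : x ∈ A9) : gamma0 x ∈ A9 := by
  obtain ⟨hint, hsum⟩ := hx
  refine ⟨fun i => ?_, ?_⟩
  · obtain ⟨m, hm⟩ := hint i.rev
    exact ⟨-m, by simp [gamma0, hm]⟩
  · rw [sum_gamma0, hsum, neg_zero]

theorem five_smul_gamma0_alphaA9_sub_mem :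
    (5 : ℚ) • gamma0 alphaA9 - (5 : ℚ) • alphaA9 ∈ A9 := by
  have h := A9.sub_mem (A9.smul_mem (5 : ℤ) gamma0_alphaA9_add_mem) ten_smul_alphaA9_mem
  convert h using 1
  module

/-- The map `γ₀ ⊕ γ₀ ⊕ id` as a `ℤ`-linear endomorphism of `ℚ²⁶`. -/
def gammaLinear : V26 →ₗ[ℤ] V26 :=
  AddMonoidHom.toIntLinearMap
    { toFun := fun p => (gamma0 p.1, gamma0 p.2.1, p.2.2)
      map_zero' := by simp only [Prod.fst_zero, Prod.snd_zero, gamma0_zero, Prod.mk_zero_zero]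
      map_add' := fun p q => by simp only [Prod.fst_add, Prod.snd_add, gamma0_add, Prod.mk_add_mk] }

theorem gammaLinear_apply (p : V26) : gammaLinear p = (gamma0 p.1, gamma0 p.2.1, p.2.2) := rfl

theorem root_mem_NL2 {x y : V10} {z : V6} (hx : x ∈ A9) (hy : y ∈ A9) (hz : z ∈ D6) :
    ((x, y, z) : V26) ∈ NL2 :=
  Submodule.subset_span (Or.inl ⟨hx, hy, hz⟩)

theorem gammaLinear_mem_NL2 {p : V26} (hp : p ∈ NL2) : gammaLinear p ∈ NL2 := by
  suffices h : NL2 ≤ NL2.comap gammaLinear from h hp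
  refine Submodule.span_le.mpr ?_
  rintro q (⟨hx, hy, hz⟩ | rfl | rfl | rfl)
  · exact root_mem_NL2 (gamma0_mem_A9 hx) (gamma0_mem_A9 hy) hz
  · have hglue : (((2 : ℚ) • alphaA9, (4 : ℚ) • alphaA9, 0) : V26) ∈ NL2 :=
      Submodule.subset_span (by simp)
    have hroot := root_mem_NL2 (A9.smul_mem (2 : ℤ) gamma0_alphaA9_add_mem)
      (A9.smul_mem (4 : ℤ) gamma0_alphaA9_add_mem) D6.zero_mem
    simp only [SetLike.mem_coe, Submodule.mem_comap, gammaLinear_apply, gamma0_smul]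
    convert NL2.sub_mem hroot hglue using 1
    refine Prod.ext ?_ (Prod.ext ?_ ?_) <;> simp only [Prod.fst_sub, Prod.snd_sub] <;> module
  · have hglue : (((5 : ℚ) • alphaA9, 0, delta6) : V26) ∈ NL2 :=
      Submodule.subset_span (by simp)
    have hroot := root_mem_NL2 five_smul_gamma0_alphaA9_sub_mem A9.zero_mem D6.zero_mem
    simp only [SetLike.mem_coe, Submodule.mem_comap, gammaLinear_apply, gamma0_smul, gamma0_zero]
    convert NL2.add_mem hroot hglue using 1
    simp
  · have hglue : ((0, (5 : ℚ) • alphaA9, deltaTilde6) : V26) ∈ NL2 :=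
      Submodule.subset_span (by simp)
    have hroot := root_mem_NL2 A9.zero_mem five_smul_gamma0_alphaA9_sub_mem D6.zero_mem
    simp only [SetLike.mem_coe, Submodule.mem_comap, gammaLinear_apply, gamma0_smul, gamma0_zero]
    convert NL2.add_mem hroot hglue using 1
    simp

/-- The map `Γ = γ₀ ⊕ γ₀ ⊕ id` maps the Niemeier lattice `N(A₉²D₆)` onto
itself; it is an automorphism of `N(A₉²D₆)` of order `2`. -/
theorem gamma_preserves_NiemeierA9A9D6 :
    (fun p : V26 => (gamma0 p.1, gamma0 p.2.1, p.2.2)) '' (NL2 : Set V26) = (NL2 : Set V26) ∧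
    (fun p : V26 => (gamma0 p.1, gamma0 p.2.1, p.2.2)) ∘
      (fun p : V26 => (gamma0 p.1, gamma0 p.2.1, p.2.2)) = id ∧
    (fun p : V26 => (gamma0 p.1, gamma0 p.2.1, p.2.2)) ≠ id := by
  refine ⟨?_, ?_, ?_⟩
  · refine Set.Subset.antisymm ?_ fun p hp => ⟨gammaLinear p, gammaLinear_mem_NL2 hp, ?_⟩
    · rintro _ ⟨p, hp, rfl⟩
      exact gammaLinear_mem_NL2 hp
    · simp only [gammaLinear_apply, gamma0_gamma0]
  · funext p
    simp only [Function.comp_apply, gamma0_gamma0, id]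
  · intro h
    have h1 := congrFun (congrArg Prod.fst (congrFun h ((fun _ => 1), 0, 0))) 0
    norm_num [gamma0] at h1
end
end

section
/- The orthogonal complement of the sublattice i₁(A₅) in the root lattice D₆ is the rank-one lattice ℤ·z₆, where z₆ = d₁+2d₂+3d₃+4d₄+2d₅+3d₆ = e₁+e₂+e₃+e₄+e₅+e₆, a vector of norm ⟨z₆,z₆⟩ = 6. -/
noncomputable section

/-- The vector `z₆ = e₁+e₂+e₃+e₄+e₅+e₆`. -/
def z6 : V6 := ![1, 1, 1, 1, 1, 1]

theorem bil6_add_right (x y z : V6) : bil6 x (y + z) = bil6 x y + bil6 x z := by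
  simp [bil6, mul_add, Finset.sum_add_distrib]

theorem bil6_zsmul_right (c : ℤ) (x y : V6) : bil6 x (c • y) = c * bil6 x y := by
  simp [bil6, Finset.mul_sum, mul_left_comm]

/-- A vector is orthogonal to a span iff it is orthogonal to the spanning set. -/
theorem bil6_eq_zero_on_span_iff (x : V6) (s : Set V6) :
    (∀ m ∈ Submodule.span ℤ s, bil6 x m = 0) ↔ ∀ m ∈ s, bil6 x m = 0 := by
  refine ⟨fun h m hm => h m (Submodule.subset_span hm), fun h m hm => ?_⟩
  induction hm using Submodule.span_induction with
  | mem m hm => exact h m hm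
  | zero => simp [bil6]
  | add y z _ _ hy hz => rw [bil6_add_right, hy, hz, add_zero]
  | smul c y _ hy => rw [bil6_zsmul_right, hy, mul_zero]

/-- Orthogonality to `i₁(A₅)` means that all coordinates agree. -/
theorem bil6_eq_zero_on_i1A5_iff (x : V6) :
    (∀ m ∈ i1A5, bil6 x m = 0) ↔ ∀ i, x i = x 0 := by
  rw [i1A5, bil6_eq_zero_on_span_iff]
  simp only [Set.mem_insert_iff, Set.mem_singleton_iff, forall_eq_or_imp, forall_eq, bil6,
    Fin.sum_univ_six, Fin.forall_fin_succ, d1, d2, d3, d4, d5]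
  simp
  grind

theorem z6_apply (i : Fin 6) : z6 i = 1 := by fin_cases i <;> rfl

theorem z6_mem_D6 : z6 ∈ D6 := by
  refine ⟨fun i => ⟨1, by simp [z6_apply]⟩, 3, ?_⟩
  norm_num [z6_apply]

/-- The orthogonal complement of `i₁(A₅)` in `D₆` is the rank-one lattice
`ℤ·z₆`, where `z₆ = d₁+2d₂+3d₃+4d₄+2d₅+3d₆ = e₁+⋯+e₆` has norm `6`. -/
theorem orthogonal_complement_of_i1A5_in_D6 :
    z6 = d1 + (2 : ℚ) • d2 + (3 : ℚ) • d3 + (4 : ℚ) • d4 + (2 : ℚ) • d5 + (3 : ℚ) • d6 ∧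
    {x : V6 | x ∈ D6 ∧ ∀ m ∈ i1A5, bil6 x m = 0} = {x : V6 | ∃ c : ℤ, x = c • z6} ∧
    bil6 z6 z6 = 6 := by
  refine ⟨?_, ?_, ?_⟩
  · ext i
    fin_cases i <;> simp [z6, d1, d2, d3, d4, d5, d6] <;> norm_num
  · ext x
    simp only [Set.mem_ofPred_eq, bil6_eq_zero_on_i1A5_iff]
    constructor
    · rintro ⟨⟨hxint, -⟩, hx⟩
      obtain ⟨c, hc⟩ := hxint 0
      exact ⟨c, funext fun i => by simp [hx i, hc, z6_apply]⟩
    · rintro ⟨c, rfl⟩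
      exact ⟨D6.smul_mem c z6_mem_D6, fun i => by simp [z6_apply]⟩
  · simp [bil6, z6_apply]
end
end

section
/- The orthogonal complement of ℤd₆ in the root lattice D₆ equals the ℤ-span of {d₅, x₃, d₃, d₂, d₁}, where x₃ = d₅+d₆+2d₄+d₃; moreover d₅ is orthogonal to x₃, d₃, d₂ and d₁, and the ℤ-span of {x₃, d₃, d₂, d₁} is isometric to the D₄ root lattice, so this orthogonal complement is isometric to A₁ ⊕ D₄. -/
noncomputable section

abbrev V4 : Type := Fin 4 → ℚ

/-- The standard bilinear form on `ℚ⁴`. -/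
def bil4 (x y : V4) : ℚ := ∑ i, x i * y i

/-- The `D₄` root lattice: integer vectors in `ℚ⁴` with even coordinate sum. -/
def D4 : Submodule ℤ V4 where
  carrier := {x | (∀ i, ∃ m : ℤ, x i = (m : ℚ)) ∧ ∃ k : ℤ, (∑ i, x i) = 2 * (k : ℚ)}
  add_mem' := by
    rintro x y ⟨hx1, kx, hx2⟩ ⟨hy1, ky, hy2⟩
    refine ⟨fun i => ?_, kx + ky, ?_⟩
    · obtain ⟨m, hm⟩ := hx1 i
      obtain ⟨m', hm'⟩ := hy1 i
      exact ⟨m + m', by push_cast [Pi.add_apply, hm, hm']; ring⟩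
    · have : (∑ i, (x + y) i) = (∑ i, x i) + ∑ i, y i := by
        simp [Pi.add_apply, Finset.sum_add_distrib]
      rw [this, hx2, hy2]; push_cast; ring
  zero_mem' := ⟨fun i => ⟨0, by simp⟩, 0, by simp⟩
  smul_mem' := by
    rintro c x ⟨hx1, k, hx2⟩
    refine ⟨fun i => ?_, c * k, ?_⟩
    · obtain ⟨m, hm⟩ := hx1 i
      refine ⟨c * m, ?_⟩
      have : (c • x) i = (c : ℚ) * x i := by simp [Pi.smul_apply, zsmul_eq_mul]
      rw [this, hm]; push_cast; ring
    · have : (∑ i, (c • x) i) = (c : ℚ) * ∑ i, x i := by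
        simp [Pi.smul_apply, zsmul_eq_mul, Finset.mul_sum]
      rw [this, hx2]; push_cast; ring

/-- The vector `x₃ = d₅ + d₆ + 2d₄ + d₃`. -/
def x3 : V6 := d5 + d6 + (2 : ℚ) • d4 + d3

lemma x3_eq : x3 = ![0, 0, 1, 1, 0, 0] := by
  ext i
  fin_cases i <;> norm_num [x3, d3, d4, d5, d6]

/-- The inclusion of `ℚ⁴` in `ℚ⁶` as the first four coordinates. -/
def embedV4 : V4 →ₗ[ℤ] V6 where
  toFun y := ![y 0, y 1, y 2, y 3, 0, 0]
  map_add' x y := by ext i; fin_cases i <;> simp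
  map_smul' c x := by ext i; fin_cases i <;> simp

lemma embedV4_apply (y : V4) : embedV4 y = ![y 0, y 1, y 2, y 3, 0, 0] := rfl

lemma embedV4_injective : Function.Injective embedV4 := by
  intro x y h
  ext i
  fin_cases i
  · exact congrFun h 0
  · exact congrFun h 1
  · exact congrFun h 2
  · exact congrFun h 3

lemma bil6_embedV4 (x y : V4) : bil6 (embedV4 x) (embedV4 y) = bil4 x y := by
  simp [bil6, bil4, embedV4_apply, Fin.sum_univ_succ]

lemma intCast_mem_D4 {a b c d k : ℤ} (h : a + b + c + d = 2 * k) :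
    (![(a : ℚ), b, c, d] : V4) ∈ D4 := by
  refine ⟨fun i => ?_, k, ?_⟩
  · fin_cases i
    exacts [⟨a, rfl⟩, ⟨b, rfl⟩, ⟨c, rfl⟩, ⟨d, rfl⟩]
  · rw [Fin.sum_univ_four]
    change (a : ℚ) + b + c + d = 2 * k
    exact_mod_cast h

lemma map_embedV4_D4 : D4.map embedV4 = Submodule.span ℤ {x3, d3, d2, d1} := by
  apply le_antisymm
  · rintro _ ⟨y, ⟨hy, k, hk⟩, rfl⟩
    choose m hm using hy
    rw [Fin.sum_univ_four] at hk
    have key : embedV4 y =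
        k • x3 + ((m 0 + m 1 + m 2 - k) • d3 + ((m 0 + m 1) • d2 + m 0 • d1)) := by
      rw [x3_eq, embedV4_apply]
      ext i
      fin_cases i <;> simp [d1, d2, d3, ← hm]
      all_goals linarith
    rw [key]
    refine add_mem (Submodule.smul_mem _ _ ?_) (add_mem (Submodule.smul_mem _ _ ?_)
      (add_mem (Submodule.smul_mem _ _ ?_) (Submodule.smul_mem _ _ ?_))) <;>
    exact Submodule.subset_span (by simp)
  · rw [Submodule.span_le]
    rintro _ (rfl | rfl | rfl | rfl)
    · exact ⟨_, intCast_mem_D4 (a := 0) (b := 0) (c := 1) (d := 1) (k := 1) rfl, by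
        simp [embedV4_apply, x3_eq]⟩
    · exact ⟨_, intCast_mem_D4 (a := 0) (b := 0) (c := 1) (d := -1) (k := 0) rfl, by
        simp [embedV4_apply, d3]⟩
    · exact ⟨_, intCast_mem_D4 (a := 0) (b := 1) (c := -1) (d := 0) (k := 0) rfl, by
        simp [embedV4_apply, d2]⟩
    · exact ⟨_, intCast_mem_D4 (a := 1) (b := -1) (c := 0) (d := 0) (k := 0) rfl, by
        simp [embedV4_apply, d1]⟩

/-- The map `A₁ ⊕ D₄ → ℚ⁶` sending the generator of `A₁` to `d₅`. -/
def embedA1D4 : ℤ × D4 →ₗ[ℤ] V6 :=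
  (LinearMap.toSpanSingleton ℤ V6 d5).coprod (embedV4 ∘ₗ D4.subtype)

lemma embedA1D4_apply (p : ℤ × D4) :
    embedA1D4 p = ![p.2.1 0, p.2.1 1, p.2.1 2, p.2.1 3, (p.1 : ℚ), -(p.1 : ℚ)] := by
  ext i
  fin_cases i <;> simp [embedA1D4, embedV4_apply, d5]

lemma embedA1D4_injective : Function.Injective embedA1D4 := by
  rintro ⟨m, x⟩ ⟨n, y⟩ h
  rw [embedA1D4_apply, embedA1D4_apply] at h
  refine Prod.ext (by simpa using congrFun h 4) (Subtype.ext ?_)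
  ext i
  fin_cases i
  · exact congrFun h 0
  · exact congrFun h 1
  · exact congrFun h 2
  · exact congrFun h 3

lemma range_embedA1D4 :
    LinearMap.range embedA1D4 = Submodule.span ℤ {d5, x3, d3, d2, d1} := by
  rw [embedA1D4, LinearMap.range_coprod, LinearMap.range_comp, Submodule.range_subtype,
    map_embedV4_D4, LinearMap.range_toSpanSingleton, Submodule.span_insert d5]

lemma bil6_embedA1D4 (p q : ℤ × D4) :
    bil6 (embedA1D4 p) (embedA1D4 q) = 2 * (p.1 : ℚ) * (q.1 : ℚ) + bil4 p.2 q.2 := by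
  rw [embedA1D4_apply, embedA1D4_apply]
  simp [bil6, bil4, Fin.sum_univ_succ]
  ring

lemma mem_range_embedA1D4 {x : V6} :
    x ∈ LinearMap.range embedA1D4 ↔ x ∈ D6 ∧ x 4 + x 5 = 0 := by
  constructor
  · rintro ⟨⟨n, y, hy, k, hk⟩, rfl⟩
    rw [embedA1D4_apply]
    refine ⟨⟨fun i => ?_, k, ?_⟩, by simp⟩
    · fin_cases i
      exacts [hy 0, hy 1, hy 2, hy 3, ⟨n, rfl⟩, ⟨-n, by simp⟩]
    · rw [Fin.sum_univ_four] at hk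
      simp [Fin.sum_univ_six, hk]
  · rintro ⟨⟨hx, k, hk⟩, h⟩
    rw [Fin.sum_univ_six] at hk
    obtain ⟨n, hn⟩ := hx 4
    have hy : (![x 0, x 1, x 2, x 3] : V4) ∈ D4 := by
      refine ⟨fun i => ?_, k, ?_⟩
      · fin_cases i
        exacts [hx 0, hx 1, hx 2, hx 3]
      · rw [Fin.sum_univ_four]
        change x 0 + x 1 + x 2 + x 3 = 2 * k
        linarith
    refine ⟨(n, ⟨_, hy⟩), ?_⟩
    rw [embedA1D4_apply]
    ext i
    fin_cases i <;> simp [hn]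
    linarith

lemma forall_bil6_zsmul_d6_eq_zero_iff (x : V6) :
    (∀ m : V6, (∃ c : ℤ, m = c • d6) → bil6 x m = 0) ↔ x 4 + x 5 = 0 := by
  constructor
  · intro h
    simpa [bil6, d6, Fin.sum_univ_six] using h d6 ⟨1, by simp⟩
  · rintro h _ ⟨c, rfl⟩
    simp only [bil6, d6, Fin.sum_univ_six]
    simp
    linear_combination (c : ℚ) * h

/-- An injective linear map with range `S` is inverted on `S` by a linear equivalence. -/
lemma exists_linearEquiv_of_range_eq {R M N : Type*} [Ring R] [AddCommGroup M] [AddCommGroup N]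
    [Module R M] [Module R N] {φ : M →ₗ[R] N} (hφ : Function.Injective φ) {S : Submodule R N}
    (hS : LinearMap.range φ = S) : ∃ f : S ≃ₗ[R] M, ∀ u : S, φ (f u) = u := by
  subst hS
  exact ⟨(LinearEquiv.ofInjective φ hφ).symm, fun u =>
    congrArg Subtype.val ((LinearEquiv.ofInjective φ hφ).apply_symm_apply u)⟩

/-- The orthogonal complement of `ℤd₆` in `D₆` is the `ℤ`-span of
`{d₅, x₃, d₃, d₂, d₁}`; `d₅` is orthogonal to `x₃, d₃, d₂, d₁`; the span of
`{x₃, d₃, d₂, d₁}` is isometric to the `D₄` root lattice, and the whole complement is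
isometric to `A₁ ⊕ D₄` (where `A₁` is `ℤ` with the form `(x,y) ↦ 2xy`). -/
theorem orthogonal_complement_of_d6_in_D6 :
    {x : V6 | x ∈ D6 ∧ ∀ m : V6, (∃ c : ℤ, m = c • d6) → bil6 x m = 0} =
      (Submodule.span ℤ ({d5, x3, d3, d2, d1} : Set V6) : Set V6) ∧
    bil6 d5 x3 = 0 ∧ bil6 d5 d3 = 0 ∧ bil6 d5 d2 = 0 ∧ bil6 d5 d1 = 0 ∧
    (∃ f : Submodule.span ℤ ({x3, d3, d2, d1} : Set V6) ≃ₗ[ℤ] D4,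
      ∀ u v : Submodule.span ℤ ({x3, d3, d2, d1} : Set V6),
        bil4 (f u) (f v) = bil6 (u : V6) (v : V6)) ∧
    (∃ F : Submodule.span ℤ ({d5, x3, d3, d2, d1} : Set V6) ≃ₗ[ℤ] (ℤ × D4),
      ∀ u v : Submodule.span ℤ ({d5, x3, d3, d2, d1} : Set V6),
        bil6 (u : V6) (v : V6) =
          2 * ((F u).1 : ℚ) * ((F v).1 : ℚ) + bil4 ((F u).2 : V4) ((F v).2 : V4)) := by
  refine ⟨?_, ?_, ?_, ?_, ?_, ?_, ?_⟩
  · ext x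
    rw [← range_embedA1D4, SetLike.mem_coe, mem_range_embedA1D4, Set.mem_ofPred_eq,
      forall_bil6_zsmul_d6_eq_zero_iff]
  · simp [x3_eq, bil6, d5, Fin.sum_univ_six]
  · simp [bil6, d5, d3, Fin.sum_univ_six]
  · simp [bil6, d5, d2, Fin.sum_univ_six]
  · simp [bil6, d5, d1, Fin.sum_univ_six]
  · obtain ⟨f, hf⟩ := exists_linearEquiv_of_range_eq (φ := embedV4 ∘ₗ D4.subtype)
      (embedV4_injective.comp Subtype.val_injective)
      (by rw [LinearMap.range_comp, Submodule.range_subtype, map_embedV4_D4])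
    refine ⟨f, fun u v => ?_⟩
    rw [← hf u, ← hf v]
    exact (bil6_embedV4 _ _).symm
  · obtain ⟨F, hF⟩ := exists_linearEquiv_of_range_eq embedA1D4_injective range_embedA1D4
    refine ⟨F, fun u v => ?_⟩
    rw [← bil6_embedA1D4, hF, hF]
end
end

section
/- Let L = N(D₆⁴), let T be the sublattice {(x, c·d₆, 0, 0) : x ∈ i₁(A₅), c ∈ ℤ} of L (the embedded copy of A₅ ⊕ A₁), let W be the orthogonal complement of T in L and N the orthogonal complement of T in D₆⊕D₆⊕D₆⊕D₆. Then the quotient group W/N is isomorphic to (ℤ/2ℤ)³. -/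
noncomputable section

/-- The orthogonal complement (in `ℚ²⁴`, as a `ℤ`-submodule) of a set `S`. -/
def orth24 (S : Set V24) : Submodule ℤ V24 where
  carrier := {x | ∀ t ∈ S, bil24 x t = 0}
  add_mem' := by
    intro x y hx hy t ht
    have h : bil24 (x + y) t = bil24 x t + bil24 y t := by
      simp [bil24, bil6, Pi.add_apply, add_mul, Finset.sum_add_distrib]
    rw [h, hx t ht, hy t ht, add_zero]
  zero_mem' := by intro t ht; simp [bil24, bil6]
  smul_mem' := by
    intro c x hx t ht
    have h : bil24 (c • x) t = (c : ℚ) * bil24 x t := by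
      simp [bil24, bil6, Pi.smul_apply, zsmul_eq_mul, Finset.mul_sum, mul_assoc]
    rw [h, hx t ht, mul_zero]

/-- The embedded copy `T = {(x, c·d₆, 0, 0) : x ∈ i₁(A₅), c ∈ ℤ}` of `A₅ ⊕ A₁` in `N(D₆⁴)`. -/
def Tset : Set V24 := {x | x 0 ∈ i1A5 ∧ (∃ c : ℤ, x 1 = c • d6) ∧ x 2 = 0 ∧ x 3 = 0}

/-- `W`, the orthogonal complement of `T` in the Niemeier lattice `N(D₆⁴)`. -/
def W10 : Submodule ℤ V24 := NL ⊓ orth24 Tset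

/-- `N`, the orthogonal complement of `T` in the root lattice `D₆ ⊕ D₆ ⊕ D₆ ⊕ D₆`. -/
def Nsub : Submodule ℤ V24 :=
  (Submodule.pi Set.univ fun _ : Fin 4 => D6) ⊓ orth24 Tset

/-- The glue vectors in coordinates. -/
theorem gam_eq : gam = ![0, fun _ => 1/2, ![1, 0, 0, 0, 0, 0], ![1/2, 1/2, 1/2, 1/2, 1/2, -1/2]] := by
  ext c i
  fin_cases c <;> fin_cases i <;>
    norm_num [gam, delta6, deltaBar6, deltaTilde6, d1, d2, d3, d4, d5, d6]

theorem two_mul_gam_zero (c : Fin 4) : 2 * gam c 0 = ((![0, 1, 2, 1] c : ℤ) : ℚ) := by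
  rw [gam_eq]; fin_cases c <;> norm_num

theorem sum_gam (c : Fin 4) : ∑ i, gam c i = ((![0, 3, 1, 2] c : ℤ) : ℚ) := by
  rw [gam_eq]; fin_cases c <;> norm_num [Fin.sum_univ_succ]

theorem gam_sub_gam_zero (c : Fin 4) (i : Fin 6) : ∃ m : ℤ, gam c i - gam c 0 = m := by
  refine ⟨(![0, 0, ![0, -1, -1, -1, -1, -1], ![0, 0, 0, 0, 0, -1]] : Fin 4 → Fin 6 → ℤ) c i, ?_⟩
  rw [gam_eq]; fin_cases c <;> fin_cases i <;> norm_num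

/-- The parity checks of the glue code: `h k` records twice the first coordinate of the `k`-th
component, and `s k` its coordinate sum. -/
def GlueParity (h s : Fin 4 → ℤ) : Prop :=
  2 ∣ h 2 - (h 1 + s 1 + s 0) ∧ 2 ∣ s 2 - (h 1 + h 0 + s 0) ∧
    2 ∣ h 3 - (s 1 + h 0 + s 0) ∧ 2 ∣ s 3 - (h 1 + s 1 + h 0)

theorem glueParity_codes {c : Fin 4 → Fin 4} (hc : c ∈ codes) :
    GlueParity (fun k => ![0, 1, 2, 1] (c k)) (fun k => ![0, 3, 1, 2] (c k)) := by
  rcases hc with rfl | rfl | rfl | rfl | rfl | rfl | rfl | rfl | rfl | rfl | rfl | rfl | rfl |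
    rfl | rfl | rfl <;> simp only [GlueParity] <;> decide

theorem exists_glueParity_of_mem_NL {x : V24} (hx : x ∈ NL) :
    ∃ h s : Fin 4 → ℤ, (∀ k, 2 * x k 0 = h k) ∧ (∀ k, ∑ i, x k i = s k) ∧
      (∀ k i, ∃ m : ℤ, x k i - x k 0 = m) ∧ GlueParity h s := by
  induction hx using Submodule.span_induction with
  | mem x hx =>
    rcases hx with hx | ⟨c, hc, rfl⟩
    · choose hint s hs using hx
      choose m hm using hint
      refine ⟨fun k => 2 * m k 0, fun k => 2 * s k, fun k => by simp [hm], fun k => by simp [hs],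
        fun k i => ⟨m k i - m k 0, by simp [hm]⟩, ?_⟩
      simp only [GlueParity]
      omega
    · exact ⟨_, _, fun k => two_mul_gam_zero (c k), fun k => sum_gam (c k),
        fun k i => gam_sub_gam_zero (c k) i, glueParity_codes hc⟩
  | zero => exact ⟨0, 0, by simp, by simp, fun k i => ⟨0, by simp⟩, by simp [GlueParity]⟩
  | add x y _ _ hx hy =>
    obtain ⟨h, s, hh, hs, hm, hp⟩ := hx
    obtain ⟨h', s', hh', hs', hm', hp'⟩ := hy
    refine ⟨h + h', s + s', fun k => ?_, fun k => ?_, fun k i => ?_, ?_⟩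
    · simp [mul_add, hh, hh']
    · simp [Finset.sum_add_distrib, hs, hs']
    · obtain ⟨m, hm⟩ := hm k i
      obtain ⟨m', hm'⟩ := hm' k i
      exact ⟨m + m', by push_cast [← hm, ← hm', Pi.add_apply]; ring⟩
    · simp only [GlueParity, Pi.add_apply] at *
      omega
  | smul a x _ hx =>
    obtain ⟨h, s, hh, hs, hm, hp⟩ := hx
    refine ⟨a • h, a • s, fun k => ?_, fun k => ?_, fun k i => ?_, ?_⟩
    · simp [← hh]; ring
    · simp [← hs, Finset.mul_sum]
    · obtain ⟨m, hm⟩ := hm k i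
      exact ⟨a * m, by push_cast [← hm]; simp; ring⟩
    · simp only [GlueParity, Pi.smul_apply, smul_eq_mul] at *
      obtain ⟨⟨p, hp⟩, ⟨q, hq⟩, ⟨r, hr⟩, ⟨t, ht⟩⟩ := hp
      exact ⟨⟨a * p, by linear_combination a * hp⟩, ⟨a * q, by linear_combination a * hq⟩,
        ⟨a * r, by linear_combination a * hr⟩, ⟨a * t, by linear_combination a * ht⟩⟩

theorem mem_D6_of_even {y : V6} {h s : ℤ} (hh : 2 * y 0 = h) (hs : ∑ i, y i = s)
    (hm : ∀ i, ∃ m : ℤ, y i - y 0 = m) (hh2 : 2 ∣ h) (hs2 : 2 ∣ s) : y ∈ D6 := by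
  obtain ⟨p, rfl⟩ := hh2
  obtain ⟨q, rfl⟩ := hs2
  refine ⟨fun i => ?_, q, by rw [hs]; push_cast; rfl⟩
  obtain ⟨m, hm⟩ := hm i
  push_cast at hh
  exact ⟨m + p, by push_cast; linarith⟩

theorem sum_eq_zero_of_mem_i1A5 {y : V6} (hy : y ∈ i1A5) : ∑ i, y i = 0 := by
  induction hy using Submodule.span_induction with
  | mem y hy =>
    rcases hy with rfl | rfl | rfl | rfl | rfl <;>
      simp [Fin.sum_univ_succ, d1, d2, d3, d4, d5]
  | zero => simp
  | add y z _ _ hy hz => simp [Finset.sum_add_distrib, hy, hz]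
  | smul a y _ hy => simp [← Finset.mul_sum, hy]

/-- The orthogonal complement of `T` in `ℚ²⁴`, in coordinates. -/
theorem mem_orth24_Tset {x : V24} :
    x ∈ orth24 Tset ↔ (∀ i, x 0 i = x 0 0) ∧ x 1 4 + x 1 5 = 0 := by
  constructor
  · intro hx
    have h0 (d : V6) (hd : d ∈ i1A5) : bil6 (x 0) d = 0 := by
      have := hx ![d, 0, 0, 0] ⟨by simpa using hd, ⟨0, by simp⟩, by simp, by simp⟩
      simpa [bil24, bil6, Fin.sum_univ_four] using this
    have h1 := hx ![0, d6, 0, 0] ⟨by simp, ⟨1, by simp⟩, by simp, by simp⟩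
    have e1 := h0 d1 (Submodule.subset_span (by simp))
    have e2 := h0 d2 (Submodule.subset_span (by simp))
    have e3 := h0 d3 (Submodule.subset_span (by simp))
    have e4 := h0 d4 (Submodule.subset_span (by simp))
    have e5 := h0 d5 (Submodule.subset_span (by simp))
    simp [bil24, bil6, Fin.sum_univ_succ, d1, d2, d3, d4, d5, d6] at e1 e2 e3 e4 e5 h1
    refine ⟨fun i => ?_, h1⟩
    fin_cases i <;> simp <;> linarith
  · rintro ⟨h0, h1⟩ t ⟨ht0, ⟨c, ht1⟩, ht2, ht3⟩
    have hb0 : bil6 (x 0) (t 0) = 0 := by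
      simp only [bil6, h0, ← Finset.mul_sum, sum_eq_zero_of_mem_i1A5 ht0, mul_zero]
    have hb1 : bil6 (x 1) (t 1) = 0 := by
      rw [ht1]
      simp [bil6, Fin.sum_univ_succ, d6]
      linear_combination (c : ℚ) * h1
    rw [bil24, Fin.sum_univ_four, hb0, hb1, ht2, ht3]
    simp [bil6]

/-- Reduction modulo two of an integer-valued linear functional. -/
def floorModTwo {M : Type*} [AddCommGroup M] (f : M →+ ℚ) (hf : ∀ x, ∃ m : ℤ, f x = m) :
    M →+ ZMod 2 where
  toFun x := (⌊f x⌋ : ZMod 2)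
  map_zero' := by simp
  map_add' x y := by
    obtain ⟨m, hm⟩ := hf x
    obtain ⟨n, hn⟩ := hf y
    simp [hm, hn]

theorem floorModTwo_apply {M : Type*} [AddCommGroup M] {f : M →+ ℚ}
    {hf : ∀ x, ∃ m : ℤ, f x = m} {x : M} {m : ℤ} (hm : f x = m) :
    floorModTwo f hf x = m := by
  simp [floorModTwo, hm]

/-- Twice the first coordinate of the `k`-th component, on `W`. -/
def halfCoord (k : Fin 4) : W10 →+ ℚ where
  toFun x := 2 * x.1 k 0
  map_zero' := by simp
  map_add' x y := by simp [mul_add]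

/-- The coordinate sum of the `k`-th component, on `W`. -/
def coordSum (k : Fin 4) : W10 →+ ℚ where
  toFun x := ∑ i, x.1 k i
  map_zero' := by simp
  map_add' x y := by simp [Finset.sum_add_distrib]

theorem halfCoord_integral (k : Fin 4) (x : W10) : ∃ m : ℤ, halfCoord k x = m :=
  let ⟨h, _, hh, _⟩ := exists_glueParity_of_mem_NL x.2.1
  ⟨h k, hh k⟩

theorem coordSum_integral (k : Fin 4) (x : W10) : ∃ m : ℤ, coordSum k x = m :=
  let ⟨_, s, _, hs, _⟩ := exists_glueParity_of_mem_NL x.2.1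
  ⟨s k, hs k⟩

/-- The glue class of an element of `W`. -/
def glueClass : W10 →+ ZMod 2 × ZMod 2 × ZMod 2 :=
  (floorModTwo (halfCoord 0) (halfCoord_integral 0)).prod
    ((floorModTwo (halfCoord 1) (halfCoord_integral 1)).prod
      (floorModTwo (coordSum 1) (coordSum_integral 1)))

theorem glueClass_apply {x : W10} {a b c : ℤ} (ha : 2 * x.1 0 0 = a) (hb : 2 * x.1 1 0 = b)
    (hc : ∑ i, x.1 1 i = c) : glueClass x = (↑a, ↑b, ↑c) :=
  Prod.ext (floorModTwo_apply ha) (Prod.ext (floorModTwo_apply hb) (floorModTwo_apply hc))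

theorem glueClass_eq_zero_iff (x : W10) : glueClass x = 0 ↔ x.1 ∈ Nsub := by
  constructor
  · intro hx
    obtain ⟨h, s, hh, hs, hm, hp⟩ := exists_glueParity_of_mem_NL x.2.1
    rw [glueClass_apply (hh 0) (hh 1) (hs 1), Prod.mk_eq_zero, Prod.mk_eq_zero] at hx
    simp only [ZMod.intCast_zmod_eq_zero_iff_dvd] at hx
    obtain ⟨h0, h1, s1⟩ := hx
    have hs0 : s 0 = 3 * h 0 := by
      have hsum := hs 0
      simp only [(mem_orth24_Tset.1 x.2.2).1, Finset.sum_const, Finset.card_univ,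
        Fintype.card_fin] at hsum
      have : ((s 0 : ℤ) : ℚ) = 3 * h 0 := by
        rw [← hsum, ← hh 0]
        simp
        ring
      exact_mod_cast this
    simp only [GlueParity] at hp
    have hh2 (k : Fin 4) : 2 ∣ h k := by fin_cases k <;> simp <;> omega
    have hs2 (k : Fin 4) : 2 ∣ s k := by fin_cases k <;> simp <;> omega
    exact ⟨fun k _ => mem_D6_of_even (hh k) (hs k) (hm k) (hh2 k) (hs2 k), x.2.2⟩
  · rintro ⟨hx, -⟩
    obtain ⟨h0, -⟩ := hx 0 trivial
    obtain ⟨h1, s, hs⟩ := hx 1 trivial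
    obtain ⟨m, hm⟩ := h0 0
    obtain ⟨n, hn⟩ := h1 0
    rw [glueClass_apply (a := 2 * m) (b := 2 * n) (c := 2 * s) (by simp [hm]) (by simp [hn])
      (by simp [hs]), Prod.mk_eq_zero, Prod.mk_eq_zero]
    simp only [ZMod.intCast_zmod_eq_zero_iff_dvd]
    simp

theorem glue_mem_NL {c : Fin 4 → Fin 4} (hc : c ∈ codes) : (fun k => gam (c k)) ∈ NL :=
  Submodule.subset_span (Or.inr ⟨c, hc, rfl⟩)

theorem glueClass_surjective : Function.Surjective glueClass := by
  have hu : (fun k => gam (![1, 0, 3, 2] k)) ∈ W10 := by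
    refine ⟨glue_mem_NL (by simp [codes]), mem_orth24_Tset.2 ?_⟩
    simp [gam_eq]
  have hv : (fun k => gam (![0, 2, 3, 1] k)) ∈ W10 := by
    refine ⟨glue_mem_NL (by simp [codes]), mem_orth24_Tset.2 ?_⟩
    simp [gam_eq]
  have hw : (fun k => gam (![0, 1, 2, 3] k)) + ![0, ![0, 0, 0, -1, 0, -1], 0, 0] ∈ W10 := by
    refine ⟨add_mem (glue_mem_NL (by simp [codes]))
      (Submodule.subset_span (Or.inl fun k => ?_)), mem_orth24_Tset.2 ?_⟩
    · fin_cases k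
      · exact zero_mem D6
      · refine ⟨fun i => ⟨(![0, 0, 0, -1, 0, -1] : Fin 6 → ℤ) i, ?_⟩, -1, ?_⟩
        · fin_cases i <;> simp
        · norm_num [Fin.sum_univ_succ]
      · exact zero_mem D6
      · exact zero_mem D6
    · simp [gam_eq]
      norm_num
  have gu : glueClass ⟨_, hu⟩ = (((1 : ℤ) : ZMod 2), ((0 : ℤ) : ZMod 2), ((0 : ℤ) : ZMod 2)) := by
    apply glueClass_apply <;> simp [gam_eq]
  have gv : glueClass ⟨_, hv⟩ = (((0 : ℤ) : ZMod 2), ((2 : ℤ) : ZMod 2), ((1 : ℤ) : ZMod 2)) := by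
    apply glueClass_apply <;> simp [gam_eq, Fin.sum_univ_succ]
  have gw : glueClass ⟨_, hw⟩ = (((0 : ℤ) : ZMod 2), ((1 : ℤ) : ZMod 2), ((1 : ℤ) : ZMod 2)) := by
    apply glueClass_apply <;> norm_num [gam_eq, Fin.sum_univ_succ]
  rintro ⟨a, b, c⟩
  obtain ⟨a, rfl⟩ := ZMod.intCast_surjective a
  obtain ⟨b, rfl⟩ := ZMod.intCast_surjective b
  obtain ⟨c, rfl⟩ := ZMod.intCast_surjective c
  refine ⟨a • ⟨_, hu⟩ + (c - b) • ⟨_, hv⟩ + b • ⟨_, hw⟩, ?_⟩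
  have two : (2 : ZMod 2) = 0 := rfl
  rw [map_add, map_add, map_zsmul, map_zsmul, map_zsmul, gu, gv, gw]
  simp [two]

/-- For the embedding `(i₁(A₅), d₆, 0, 0)` of `A₅ ⊕ A₁` in `N(D₆⁴)`,
the quotient `W/N` is isomorphic to `(ℤ/2ℤ)³`. -/
theorem W_quotient_N_eq_Z2_cubed :
    Nonempty ((↥W10 ⧸ Nsub.comap W10.subtype) ≃+ (ZMod 2 × ZMod 2 × ZMod 2)) := by
  have hker : (Nsub.comap W10.subtype).toAddSubgroup = glueClass.ker := by
    ext x
    exact (glueClass_eq_zero_iff x).symm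
  exact ⟨(QuotientAddGroup.quotientAddEquivOfEq hker).trans
    (QuotientAddGroup.quotientKerEquivOfSurjective glueClass glueClass_surjective)⟩
end
end

section
/- The orthogonal complement of ℤa₁ in the root lattice A₉ equals the ℤ-span of {a₁ + 2a₂, a₃, a₄, a₅, a₆, a₇, a₈, a₉}, and the Gram determinant of this basis equals 20. -/
noncomputable section
/-- The basis `(a₁+2a₂, a₃, a₄, a₅, a₆, a₇, a₈, a₉)` of the orthogonal complement of `ℤa₁`
in `A₉`. -/
def bVec : Fin 8 → V10 :=
  ![a 0 + (2 : ℚ) • a 1, a 2, a 3, a 4, a 5, a 6, a 7, a 8]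

theorem bil10_zsmul_a_zero (x : V10) (c : ℤ) : bil10 x (c • a 0) = c * (x 0 - x 1) := by
  simp [bil10, a, Fin.sum_univ_succ]
  ring

theorem orthogonal_a_zero_iff (x : V10) :
    (∀ m : V10, (∃ c : ℤ, m = c • a 0) → bil10 x m = 0) ↔ x 0 = x 1 := by
  constructor
  · intro h
    have h1 := h _ ⟨1, rfl⟩
    rw [bil10_zsmul_a_zero] at h1
    push_cast at h1
    linarith
  · rintro h _ ⟨c, rfl⟩
    rw [bil10_zsmul_a_zero, h, sub_self, mul_zero]

/-- The vectors of `A₉` orthogonal to `a₁`, as those whose first two coordinates agree. -/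
def a1Orthogonal : Submodule ℤ V10 :=
  A9 ⊓ LinearMap.eqLocus (LinearMap.proj 0 : V10 →ₗ[ℤ] ℚ) (LinearMap.proj 1)

theorem mem_a1Orthogonal {x : V10} : x ∈ a1Orthogonal ↔ x ∈ A9 ∧ x 0 = x 1 := Iff.rfl

theorem a_mem_A9 (i : Fin 9) : a i ∈ A9 := by
  refine ⟨fun j => ?_, ?_⟩
  · unfold a
    split_ifs
    exacts [⟨1, by simp⟩, ⟨-1, by simp⟩, ⟨0, by simp⟩]
  · fin_cases i <;> simp [a, Fin.sum_univ_succ]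

theorem bVec_mem_a1Orthogonal (i : Fin 8) : bVec i ∈ a1Orthogonal := by
  refine mem_a1Orthogonal.2 ⟨?_, ?_⟩
  · have h : a 0 + (2 : ℚ) • a 1 ∈ A9 := by
      rw [two_smul]
      exact A9.add_mem (a_mem_A9 0) (A9.add_mem (a_mem_A9 1) (a_mem_A9 1))
    fin_cases i
    exacts [h, a_mem_A9 2, a_mem_A9 3, a_mem_A9 4, a_mem_A9 5, a_mem_A9 6, a_mem_A9 7, a_mem_A9 8]
  · fin_cases i <;> norm_num [bVec, a]

theorem range_bVec :
    Set.range bVec = {a 0 + (2 : ℚ) • a 1, a 2, a 3, a 4, a 5, a 6, a 7, a 8} := by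
  simp only [bVec, Matrix.range_cons, Matrix.range_empty, Set.union_empty, Set.singleton_union]

/-- The coefficient of `a₁ + 2a₂` is `x₁`, and that of `aₖ` is the partial sum `x₁ + ⋯ + xₖ`. -/
theorem a1Orthogonal_le_span : a1Orthogonal ≤ Submodule.span ℤ (Set.range bVec) := by
  intro x hx
  obtain ⟨⟨hint, hsum⟩, h01⟩ := mem_a1Orthogonal.1 hx
  choose n hn using hint
  rw [Submodule.mem_span_range_iff_exists_fun]
  refine ⟨![n 0, n 0 + n 1 + n 2, n 0 + n 1 + n 2 + n 3, n 0 + n 1 + n 2 + n 3 + n 4,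
    n 0 + n 1 + n 2 + n 3 + n 4 + n 5, n 0 + n 1 + n 2 + n 3 + n 4 + n 5 + n 6,
    n 0 + n 1 + n 2 + n 3 + n 4 + n 5 + n 6 + n 7,
    n 0 + n 1 + n 2 + n 3 + n 4 + n 5 + n 6 + n 7 + n 8], ?_⟩
  simp only [Fin.sum_univ_succ, hn] at hsum h01
  simp at hsum
  ext j
  rw [hn j]
  fin_cases j <;> simp [Fin.sum_univ_succ, bVec, a] <;> linarith

theorem span_range_bVec : Submodule.span ℤ (Set.range bVec) = a1Orthogonal :=
  le_antisymm (Submodule.span_le.2 (Set.range_subset_iff.2 bVec_mem_a1Orthogonal))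
    a1Orthogonal_le_span

theorem bil10_a_left (i : Fin 9) (y : V10) : bil10 (a i) y = y i.castSucc - y i.succ := by
  fin_cases i <;> simp [bil10, a, Fin.sum_univ_succ] <;> ring

theorem bil10_a_zero_add_two_smul_left (y : V10) :
    bil10 (a 0 + (2 : ℚ) • a 1) y = y 0 + y 1 - 2 * y 2 := by
  have h : bil10 (a 0 + (2 : ℚ) • a 1) y = bil10 (a 0) y + 2 * bil10 (a 1) y := by
    simp only [bil10, Pi.add_apply, Pi.smul_apply, smul_eq_mul, add_mul, mul_assoc,
      Finset.sum_add_distrib, Finset.mul_sum]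
  rw [h, bil10_a_left, bil10_a_left]
  simp only [Fin.castSucc_zero, Fin.succ_zero_eq_one, Fin.castSucc_one, Fin.succ_one_eq_two]
  ring

theorem gram_bVec :
    (Matrix.of fun i j : Fin 8 => bil10 (bVec i) (bVec j)) =
      !![6, -2, 0, 0, 0, 0, 0, 0;
         -2, 2, -1, 0, 0, 0, 0, 0;
         0, -1, 2, -1, 0, 0, 0, 0;
         0, 0, -1, 2, -1, 0, 0, 0;
         0, 0, 0, -1, 2, -1, 0, 0;
         0, 0, 0, 0, -1, 2, -1, 0;
         0, 0, 0, 0, 0, -1, 2, -1;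
         0, 0, 0, 0, 0, 0, -1, 2] := by
  ext i j
  fin_cases i <;> fin_cases j <;>
    norm_num [bVec, bil10_a_left, bil10_a_zero_add_two_smul_left] <;> norm_num [a]

/-- The orthogonal complement of `ℤa₁` in `A₉` is spanned by
`{a₁+2a₂, a₃, …, a₉}`, and the Gram determinant of this basis is `20`. -/
theorem orthogonal_complement_of_a1_in_A9 :
    {x : V10 | x ∈ A9 ∧ ∀ m : V10, (∃ c : ℤ, m = c • a 0) → bil10 x m = 0} =
      (Submodule.span ℤ
        ({a 0 + (2 : ℚ) • a 1, a 2, a 3, a 4, a 5, a 6, a 7, a 8} : Set V10) : Set V10) ∧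
    (Matrix.of fun i j : Fin 8 => bil10 (bVec i) (bVec j)).det = 20 := by
  refine ⟨?_, ?_⟩
  · rw [← range_bVec, span_range_bVec]
    ext x
    exact and_congr_right fun _ => orthogonal_a_zero_iff x
  · rw [gram_bVec]
    simp only [norm_det]
end
end
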